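/- arXiv:2504.00331 — 2 statements merged into one kernel-verified Lean document; each statement's English description precedes it below -/
import Mathlib

section
/- There exists an arithmetic function h : ℕ → ℝ such that ∑_{n≥1} |h(n)| n^{-σ} converges for every σ > 1/2, and for every complex s with Re s > 1 one has ∑_{m₁,m₂ ≥ 1, m₁m₂ a perfect cube} s(m₁,m₂)/(m₁m₂)^s = ζ(3s−1)⁴ · ζ(6s−3) · ∑_{n≥1} h(n) n^{-s}, where ζ is the Riemann zeta function. -/
open scoped Classical

/-- `numSubgroups m₁ m₂` is the number of subgroups of the additive group
`ℤ_{m₁} × ℤ_{m₂}`. -/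
noncomputable def numSubgroups (m₁ m₂ : ℕ) : ℕ :=
  Nat.card (AddSubgroup (ZMod m₁ × ZMod m₂))

/-! By Goursat's lemma `s(m, n)` is the sum of `gcd(a, b)` over `a ∣ m`, `b ∣ n`, and `gcd(a, b)` is
in turn the double divisor sum of `φ` placed on the diagonal. Hence `n ↦ ∑ s(m₁, m₂)`, over `m₁ m₂ =
n`, is the fourth convolution power of `ζ` times `φ` placed on the squares, and its Bell series at
`p` is `(1 - X²) / ((1 - X)⁴ (1 - p X²))`. Restricting to cubes keeps every third coefficient, which
leaves a rational function with denominator `(1 - X)³ (1 - p³ X²)` and numerator `1 + (13 + 4 p) X +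
⋯`. The factor `ζ(s - 1)⁴ ζ(2 s - 3)` removes both `1 - p³ X²` and the coefficient `4 p`: what
remains is `ζ(s)³` times the Dirichlet series of a multiplicative function which is `O(1)` at `p`
and `O(pᵏ)` at `pᵏ`. It converges absolutely for `Re s > 3 / 2`, that is, for `Re s > 1 / 2` after
replacing `s` by `3 s`. -/

section SubgroupsOfProducts

variable {G H : Type*} [AddCommGroup G] [AddCommGroup H]

/-- The subgroup `{(x, y) | x ∈ K, φ x = y + L}` of `G × H` attached to subgroups `K ≤ G`, `L ≤ H`
and a homomorphism `φ : K → H ⧸ L`. Every subgroup of `G × H` has this form for exactly one triple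
(Goursat's lemma, in its asymmetric form). -/
def goursatSubgroup (t : Σ (K : AddSubgroup G) (L : AddSubgroup H), K →+ H ⧸ L) :
    AddSubgroup (G × H) :=
  (t.2.2.graph.comap ((AddMonoidHom.id t.1).prodMap (QuotientAddGroup.mk' t.2.1))).map
    (t.1.subtype.prodMap (AddMonoidHom.id H))

theorem mem_goursatSubgroup {K : AddSubgroup G} {L : AddSubgroup H} {φ : K →+ H ⧸ L} {x : G}
    {y : H} : (x, y) ∈ goursatSubgroup ⟨K, L, φ⟩ ↔ ∃ hx : x ∈ K, φ ⟨x, hx⟩ = y := by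
  simp [goursatSubgroup, AddSubgroup.mem_map, AddMonoidHom.mem_graph]

theorem exists_mem_goursatSubgroup_iff {K : AddSubgroup G} {L : AddSubgroup H} {φ : K →+ H ⧸ L}
    {x : G} : (∃ y, (x, y) ∈ goursatSubgroup ⟨K, L, φ⟩) ↔ x ∈ K := by
  simp only [mem_goursatSubgroup]
  refine ⟨fun ⟨_, hx, _⟩ ↦ hx, fun hx ↦ ?_⟩
  obtain ⟨y, hy⟩ := QuotientAddGroup.mk_surjective (φ ⟨x, hx⟩)
  exact ⟨y, hx, hy.symm⟩

theorem zero_mem_goursatSubgroup_iff {K : AddSubgroup G} {L : AddSubgroup H} {φ : K →+ H ⧸ L}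
    {y : H} : (0, y) ∈ goursatSubgroup ⟨K, L, φ⟩ ↔ y ∈ L := by
  rw [mem_goursatSubgroup, ← QuotientAddGroup.eq_zero_iff y]
  have hφ : φ ⟨0, K.zero_mem⟩ = 0 := map_zero φ
  exact ⟨fun ⟨_, hy⟩ ↦ (hφ.symm.trans hy).symm, fun hy ↦ ⟨K.zero_mem, hφ.trans hy.symm⟩⟩

theorem goursatSubgroup_injective : Function.Injective (goursatSubgroup (G := G) (H := H)) := by
  rintro ⟨K, L, φ⟩ ⟨K', L', φ'⟩ h
  obtain rfl : K = K' := by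
    ext x
    rw [← exists_mem_goursatSubgroup_iff (φ := φ), h, exists_mem_goursatSubgroup_iff]
  obtain rfl : L = L' := by
    ext y
    rw [← zero_mem_goursatSubgroup_iff (φ := φ), h, zero_mem_goursatSubgroup_iff]
  suffices φ = φ' by rw [this]
  ext ⟨x, hx⟩
  obtain ⟨y, hy⟩ := QuotientAddGroup.mk_surjective (φ ⟨x, hx⟩)
  obtain ⟨_, hy'⟩ := mem_goursatSubgroup.1 (h ▸ mem_goursatSubgroup.2 ⟨hx, hy.symm⟩)
  rw [hy', hy]

theorem goursatSubgroup_surjective : Function.Surjective (goursatSubgroup (G := G) (H := H)) := by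
  intro S
  set K := S.map (AddMonoidHom.fst G H)
  set L := S.comap (AddMonoidHom.inr G H)
  have lift_mem (x : K) : ∃ y, ((x : G), y) ∈ S := by
    obtain ⟨_, ⟨_, y⟩, hxy, rfl⟩ := x
    exact ⟨y, hxy⟩
  choose f hf using lift_mem
  have mk_eq_iff {x : G} {y z : H} (hy : (x, y) ∈ S) : (y : H ⧸ L) = z ↔ (x, z) ∈ S := by
    rw [QuotientAddGroup.eq, ← S.add_mem_cancel_left (S.neg_mem hy)]
    simp [L]
  let φ : K →+ H ⧸ L := AddMonoidHom.mk' (fun x ↦ (f x : H ⧸ L)) fun a b ↦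
    (mk_eq_iff (hf (a + b))).2 (S.add_mem (hf a) (hf b))
  refine ⟨⟨K, L, φ⟩, ?_⟩
  ext ⟨x, y⟩
  rw [mem_goursatSubgroup]
  exact ⟨fun ⟨hx, hy⟩ ↦ (mk_eq_iff (hf ⟨x, hx⟩)).1 hy,
    fun h ↦ ⟨⟨(x, y), h, rfl⟩, (mk_eq_iff (hf ⟨x, _⟩)).2 h⟩⟩

theorem card_addSubgroup_prod [Fintype (AddSubgroup G)] [Fintype (AddSubgroup H)] [Finite G]
    [Finite H] :
    Nat.card (AddSubgroup (G × H)) =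
      ∑ K : AddSubgroup G, ∑ L : AddSubgroup H, Nat.card (K →+ H ⧸ L) := by
  have (K : AddSubgroup G) (L : AddSubgroup H) : Finite (K →+ H ⧸ L) := DFunLike.finite _
  rw [← Nat.card_congr (Equiv.ofBijective _
    ⟨goursatSubgroup_injective (G := G) (H := H), goursatSubgroup_surjective⟩), Nat.card_sigma]
  exact Finset.sum_congr rfl fun K _ ↦ Nat.card_sigma

end SubgroupsOfProducts

section CyclicGroups

variable {A B : Type*} [AddCommGroup A] [AddCommGroup B] [IsAddCyclic A]

theorem addSubgroup_eq_ker_nsmul_card [Finite A] (K : AddSubgroup A) :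
    K = (nsmulAddMonoidHom (Nat.card K) : A →+ A).ker := by
  refine AddSubgroup.eq_of_le_of_card_ge (fun x hx ↦ ?_) ?_
  · exact congrArg Subtype.val (card_nsmul_eq_zero' (x := (⟨x, hx⟩ : K)))
  · rw [IsAddCyclic.card_nsmulAddMonoidHom_ker]
    exact Nat.gcd_le_right _ Nat.card_pos

theorem sum_addSubgroup_card {M : Type*} [AddCommMonoid M] [Finite A] [Fintype (AddSubgroup A)]
    (F : ℕ → M) :
    ∑ K : AddSubgroup A, F (Nat.card K) = ∑ d ∈ (Nat.card A).divisors, F d := by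
  refine Finset.sum_bij (fun K _ ↦ Nat.card K) (fun K _ ↦ ?_) (fun K _ L _ h ↦ ?_) (fun d hd ↦ ?_)
    fun _ _ ↦ rfl
  · exact Nat.mem_divisors.2 ⟨K.card_addSubgroup_dvd_card, Nat.card_pos.ne'⟩
  · rw [addSubgroup_eq_ker_nsmul_card K, addSubgroup_eq_ker_nsmul_card L, h]
  · refine ⟨(nsmulAddMonoidHom d : A →+ A).ker, Finset.mem_univ _, ?_⟩
    rw [IsAddCyclic.card_nsmulAddMonoidHom_ker, Nat.gcd_eq_right (Nat.dvd_of_mem_divisors hd)]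

variable [IsAddCyclic B] [Finite B]

theorem card_addMonoidHom_of_isAddCyclic :
    Nat.card (A →+ B) = (Nat.card A).gcd (Nat.card B) := by
  let zmodHom : (A →+ B) ≃ (ZMod (Nat.card A) →+ B) :=
    (zmodAddCyclicAddEquiv ‹IsAddCyclic A›).symm.addMonoidHomCongrLeftEquiv
  let torsion : {f : ℤ →+ B // f (Nat.card A : ℤ) = 0} ≃
      (nsmulAddMonoidHom (Nat.card A) : B →+ B).ker :=
    (zmultiplesHom B).symm.subtypeEquiv fun f ↦ by
      have hf : f (Nat.card A : ℤ) = Nat.card A • f 1 := by rw [← map_nsmul, nsmul_one]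
      simp [hf]
  rw [Nat.card_congr zmodHom, Nat.card_congr (ZMod.lift (Nat.card A)).symm,
    Nat.card_congr torsion, IsAddCyclic.card_nsmulAddMonoidHom_ker, Nat.gcd_comm]

theorem card_addMonoidHom_quotient (K : AddSubgroup A) (L : AddSubgroup B) :
    Nat.card (K →+ B ⧸ L) = (Nat.card K).gcd (Nat.card B / Nat.card L) := by
  have : IsAddCyclic (B ⧸ L) :=
    isAddCyclic_of_surjective (QuotientAddGroup.mk' L) (QuotientAddGroup.mk'_surjective L)
  rw [card_addMonoidHom_of_isAddCyclic, L.card_eq_card_quotient_mul_card_addSubgroup,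
    Nat.mul_div_cancel _ Nat.card_pos]

theorem card_addSubgroup_prod_of_isAddCyclic [Finite A] :
    Nat.card (AddSubgroup (A × B)) =
      ∑ a ∈ (Nat.card A).divisors, ∑ b ∈ (Nat.card B).divisors, a.gcd b := by
  have := Fintype.ofFinite (AddSubgroup A)
  have := Fintype.ofFinite (AddSubgroup B)
  simp only [card_addSubgroup_prod, card_addMonoidHom_quotient]
  rw [sum_addSubgroup_card fun a ↦ ∑ L : AddSubgroup B, a.gcd (Nat.card B / Nat.card L)]
  refine Finset.sum_congr rfl fun a _ ↦ ?_
  rw [sum_addSubgroup_card fun b ↦ a.gcd (Nat.card B / b), Nat.sum_div_divisors _ a.gcd]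

end CyclicGroups

theorem numSubgroups_eq_sum_gcd {m n : ℕ} (hm : m ≠ 0) (hn : n ≠ 0) :
    numSubgroups m n = ∑ a ∈ m.divisors, ∑ b ∈ n.divisors, a.gcd b := by
  have : NeZero m := ⟨hm⟩
  have : NeZero n := ⟨hn⟩
  rw [numSubgroups, card_addSubgroup_prod_of_isAddCyclic, Nat.card_zmod, Nat.card_zmod]

open ArithmeticFunction
open scoped ArithmeticFunction.zeta ArithmeticFunction.Moebius

section Powers

variable {R : Type*}

/-- The arithmetic function supported on perfect `k`-th powers whose value at `n ^ k` is `f n`; its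
Dirichlet series is that of `f` at `k * s`. -/
noncomputable def extendPow [Zero R] (k : ℕ) [NeZero k] (f : ArithmeticFunction R) :
    ArithmeticFunction R where
  toFun := Function.extend (· ^ k) f fun _ ↦ 0
  map_zero' := by
    simpa [zero_pow (NeZero.ne k)] using
      (Nat.pow_left_injective (NeZero.ne k)).extend_apply f (fun _ ↦ 0) 0

/-- The arithmetic function `n ↦ g (n ^ k)`. -/
def compPow [Zero R] (k : ℕ) [NeZero k] (g : ArithmeticFunction R) : ArithmeticFunction R :=
  ⟨fun n ↦ g (n ^ k), by simp [zero_pow (NeZero.ne k)]⟩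

variable {k : ℕ} [NeZero k]

theorem extendPow_apply_pow [Zero R] (f : ArithmeticFunction R) (n : ℕ) :
    extendPow k f (n ^ k) = f n :=
  (Nat.pow_left_injective (NeZero.ne k)).extend_apply f (fun _ ↦ 0) n

theorem extendPow_apply_of_forall_ne [Zero R] (f : ArithmeticFunction R) {n : ℕ}
    (hn : ∀ m, m ^ k ≠ n) : extendPow k f n = 0 :=
  Function.extend_apply' f (fun _ ↦ 0) n fun ⟨m, hm⟩ ↦ hn m hm

theorem compPow_apply [Zero R] (g : ArithmeticFunction R) (n : ℕ) : compPow k g n = g (n ^ k) :=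
  rfl

theorem isMultiplicative_extendPow [MonoidWithZero R] {f : ArithmeticFunction R}
    (hf : f.IsMultiplicative) : (extendPow k f).IsMultiplicative := by
  refine ⟨by simpa [hf.map_one] using extendPow_apply_pow (k := k) f 1, fun {m n} hmn ↦ ?_⟩
  by_cases h : ∃ c, c ^ k = m * n
  · obtain ⟨c, hc⟩ := h
    obtain ⟨a, rfl⟩ : ∃ a, m = a ^ k := exists_eq_pow_of_mul_eq_pow (Nat.isUnit_iff.2 hmn) hc.symm
    obtain ⟨b, rfl⟩ : ∃ b, n = b ^ k :=
      exists_eq_pow_of_mul_eq_pow (Nat.isUnit_iff.2 hmn.symm) ((mul_comm ..).trans hc.symm)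
    have hab : a.Coprime b := (Nat.coprime_pow_left_iff (NeZero.pos k) ..).1
      ((Nat.coprime_pow_right_iff (NeZero.pos k) ..).1 hmn)
    simp only [← mul_pow, extendPow_apply_pow, hf.map_mul_of_coprime hab]
  · push Not at h
    rw [extendPow_apply_of_forall_ne f h]
    by_cases hm : ∃ a, a ^ k = m
    · obtain ⟨a, rfl⟩ := hm
      rw [extendPow_apply_of_forall_ne f (n := n), mul_zero]
      rintro b rfl
      exact h (a * b) (mul_pow ..)
    · rw [extendPow_apply_of_forall_ne f (not_exists.1 hm), zero_mul]

theorem isMultiplicative_compPow [MonoidWithZero R] {g : ArithmeticFunction R}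
    (hg : g.IsMultiplicative) : (compPow k g).IsMultiplicative := by
  refine ⟨by simp [compPow_apply, hg.map_one], fun {m n} hmn ↦ ?_⟩
  rw [compPow_apply, mul_pow, hg.map_mul_of_coprime (hmn.pow k k), compPow_apply, compPow_apply]

end Powers

section Convolutes

variable {R : Type*} [Semiring R]

/-- The convolute `n ↦ ∑ F d e`, over the factorizations `n = d * e`, of a function of two
variables. The double Dirichlet series of `F` with both variables equal to `s` is the Dirichlet
series of the convolute. -/
def convolute (F : ℕ → ℕ → R) : ArithmeticFunction R :=
  ⟨fun n ↦ ∑ x ∈ n.divisorsAntidiagonal, F x.1 x.2, by simp⟩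

theorem convolute_apply (F : ℕ → ℕ → R) (n : ℕ) :
    convolute F n = ∑ x ∈ n.divisorsAntidiagonal, F x.1 x.2 :=
  rfl

theorem convolute_congr {F G : ℕ → ℕ → R} (h : ∀ m n, m ≠ 0 → n ≠ 0 → F m n = G m n) :
    convolute F = convolute G := by
  ext n
  exact Finset.sum_congr rfl fun x hx ↦ h _ _
    (Nat.ne_zero_of_mem_divisorsAntidiagonal hx).1 (Nat.ne_zero_of_mem_divisorsAntidiagonal hx).2

theorem convolute_swap (F : ℕ → ℕ → R) : convolute (fun m n ↦ F n m) = convolute F := by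
  ext n
  rw [convolute_apply, ← Nat.map_swap_divisorsAntidiagonal, Finset.sum_map]
  rfl

theorem convolute_sum_divisors_left (F : ℕ → ℕ → R) :
    convolute (fun m n ↦ ∑ a ∈ m.divisors, F a n) = ζ * convolute F := by
  ext N
  have sum_divisors_eq (m n : ℕ) :
      ∑ a ∈ m.divisors, F a n = ∑ x ∈ m.divisorsAntidiagonal, F x.2 n :=
    (Nat.sum_divisorsAntidiagonal' fun _ a ↦ F a n).symm
  simp only [coe_zeta_mul_apply, convolute_apply, sum_divisors_eq,
    ← Nat.sum_divisorsAntidiagonal' fun _ d ↦ ∑ x ∈ d.divisorsAntidiagonal, F x.1 x.2,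
    Finset.sum_sigma']
  refine Finset.sum_nbij' (fun ⟨⟨_, n⟩, ⟨d, a⟩⟩ ↦ ⟨(d, a * n), (a, n)⟩)
    (fun ⟨⟨d, _⟩, ⟨a, n⟩⟩ ↦ ⟨(d * a, n), (d, a)⟩) ?_ ?_ ?_ ?_ ?_ <;>
  · simp only [Finset.mem_sigma, Nat.mem_divisorsAntidiagonal]
    grind

theorem convolute_sum_divisors (F : ℕ → ℕ → R) :
    convolute (fun m n ↦ ∑ a ∈ m.divisors, ∑ b ∈ n.divisors, F a b) = ζ ^ 2 * convolute F := by
  rw [convolute_sum_divisors_left fun a n ↦ ∑ b ∈ n.divisors, F a b, ← convolute_swap,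
    convolute_sum_divisors_left fun b a ↦ F a b, convolute_swap, sq, mul_assoc]

theorem convolute_diagonal (u : ArithmeticFunction R) :
    convolute (fun a b ↦ if a = b then u a else 0) = extendPow 2 u := by
  ext n
  rw [convolute_apply]
  by_cases h : ∃ m, m ^ 2 = n
  · obtain ⟨m, rfl⟩ := h
    rw [extendPow_apply_pow]
    rcases eq_or_ne m 0 with rfl | hm
    · simp
    rw [Finset.sum_eq_single (m, m)]
    · simp
    · rintro ⟨a, b⟩ hab hne
      refine if_neg fun heq : a = b ↦ hne ?_
      have : a ^ 2 = m ^ 2 := by rw [sq, ← (Nat.mem_divisorsAntidiagonal.1 hab).1, ← heq]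
      rw [← heq, Nat.pow_left_injective two_ne_zero this]
    · simp [sq, hm]
  · rw [extendPow_apply_of_forall_ne u (not_exists.1 h)]
    refine Finset.sum_eq_zero fun ⟨a, b⟩ hab ↦ if_neg fun heq ↦ h ⟨a, ?_⟩
    rw [sq, ← (Nat.mem_divisorsAntidiagonal.1 hab).1, ← heq]

theorem convolute_ite_eq_pow (k : ℕ) [NeZero k] (F : ℕ → ℕ → R) :
    convolute (fun m n ↦ if ∃ j, m * n = j ^ k then F m n else 0) =
      extendPow k (compPow k (convolute F)) := by
  ext n
  rw [convolute_apply]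
  by_cases h : ∃ j, n = j ^ k
  · obtain ⟨j, rfl⟩ := h
    rw [extendPow_apply_pow, compPow_apply, convolute_apply]
    exact Finset.sum_congr rfl fun x hx ↦ if_pos ⟨j, (Nat.mem_divisorsAntidiagonal.1 hx).1⟩
  · rw [extendPow_apply_of_forall_ne _ fun j hj ↦ h ⟨j, hj.symm⟩]
    exact Finset.sum_eq_zero fun x hx ↦ if_neg ((Nat.mem_divisorsAntidiagonal.1 hx).1 ▸ h)

end Convolutes

section CountingSubgroups

theorem sum_divisors_sum_divisors_ite_eq {R : Type*} [Semiring R] (u : ArithmeticFunction R)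
    {a b : ℕ} (ha : a ≠ 0) (hb : b ≠ 0) :
    ∑ d ∈ a.divisors, ∑ e ∈ b.divisors, (if d = e then u d else 0) = (ζ * u) (a.gcd b) := by
  have divisors_gcd : (a.gcd b).divisors = a.divisors.filter (· ∈ b.divisors) := by
    ext d
    simp [Nat.dvd_gcd_iff, ha, hb]
  rw [coe_zeta_mul_apply, divisors_gcd, Finset.sum_filter]
  exact Finset.sum_congr rfl fun d _ ↦ Finset.sum_ite_eq ..

theorem natCast_gcd_eq_sum_divisors {a b : ℕ} (ha : a ≠ 0) (hb : b ≠ 0) :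
    ((a.gcd b : ℕ) : ℤ) = ∑ d ∈ a.divisors, ∑ e ∈ b.divisors,
      if d = e then (μ * (pow 1 : ArithmeticFunction ℤ)) d else 0 := by
  rw [sum_divisors_sum_divisors_ite_eq _ ha hb, ← mul_assoc, coe_zeta_mul_moebius, one_mul]
  simp

theorem convolute_numSubgroups :
    convolute (fun m n ↦ (numSubgroups m n : ℤ)) =
      ζ ^ 4 * extendPow 2 (μ * (pow 1 : ArithmeticFunction ℤ)) := by
  have numSubgroups_eq {m n : ℕ} (hm : m ≠ 0) (hn : n ≠ 0) :
      (numSubgroups m n : ℤ) = ∑ a ∈ m.divisors, ∑ b ∈ n.divisors,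
        ∑ d ∈ a.divisors, ∑ e ∈ b.divisors,
          if d = e then (μ * (pow 1 : ArithmeticFunction ℤ)) d else 0 := by
    rw [numSubgroups_eq_sum_gcd hm hn]
    push_cast
    refine Finset.sum_congr rfl fun a ha ↦ Finset.sum_congr rfl fun b hb ↦ ?_
    exact natCast_gcd_eq_sum_divisors (Nat.pos_of_mem_divisors ha).ne'
      (Nat.pos_of_mem_divisors hb).ne'
  rw [convolute_congr fun m n ↦ numSubgroups_eq, convolute_sum_divisors, convolute_sum_divisors,
    convolute_diagonal, ← mul_assoc, ← pow_add]

end CountingSubgroups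

section BellSeries

open PowerSeries

variable {R : Type*} {p : ℕ}

/-- The Bell series `∑ f (p ^ k) X ^ k` of an arithmetic function at a prime `p`: the Euler factor
at `p` of its Dirichlet series, as a formal power series in `X = p ^ (-s)`. -/
noncomputable def bellSeries [Semiring R] (hp : p.Prime) : ArithmeticFunction R →+* R⟦X⟧ where
  toFun f := mk fun k ↦ f (p ^ k)
  map_zero' := by ext; simp
  map_one' := by ext k; simp [coeff_one, one_apply, hp.ne_one]
  map_add' f g := by ext; simp
  map_mul' f g := by
    ext k
    rw [coeff_mk, coeff_mul, mul_apply, Nat.sum_divisorsAntidiagonal fun x y ↦ f x * g y,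
      Nat.sum_divisors_prime_pow hp, Finset.Nat.sum_antidiagonal_eq_sum_range_succ_mk]
    refine Finset.sum_congr rfl fun i hi ↦ ?_
    rw [coeff_mk, coeff_mk, Nat.pow_div (Finset.mem_range_succ_iff.1 hi) hp.pos]

theorem coeff_bellSeries [Semiring R] (hp : p.Prime) (f : ArithmeticFunction R) (k : ℕ) :
    coeff k (bellSeries hp f) = f (p ^ k) := by
  simp [bellSeries]

theorem eq_of_forall_bellSeries_eq [CommSemiring R] {f g : ArithmeticFunction R}
    (hf : f.IsMultiplicative) (hg : g.IsMultiplicative)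
    (h : ∀ (p : ℕ) (hp : p.Prime), bellSeries hp f = bellSeries hp g) : f = g := by
  refine (IsMultiplicative.eq_iff_eq_on_prime_powers f hf g hg).2 fun p k hp ↦ ?_
  rw [← coeff_bellSeries hp, h, coeff_bellSeries]

theorem bellSeries_extendPow [CommRing R] (k : ℕ) [NeZero k] (hp : p.Prime)
    (f : ArithmeticFunction R) :
    bellSeries hp (extendPow k f) = expand k (NeZero.ne k) (bellSeries hp f) := by
  ext n
  rw [coeff_bellSeries, coeff_expand]
  split_ifs with h
  · obtain ⟨m, rfl⟩ := h
    rw [Nat.mul_div_cancel_left _ (NeZero.pos k), coeff_bellSeries, mul_comm, pow_mul,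
      extendPow_apply_pow]
  · refine extendPow_apply_of_forall_ne f fun m hm ↦ h ?_
    obtain ⟨i, -, rfl⟩ := (Nat.dvd_prime_pow hp).1 (hm ▸ dvd_pow_self m (NeZero.ne k))
    rw [← pow_mul] at hm
    exact ⟨i, by rw [← Nat.pow_right_injective hp.two_le hm, mul_comm]⟩

theorem bellSeries_pow_mul [CommRing R] (j : ℕ) (hp : p.Prime) :
    bellSeries hp (pow j : ArithmeticFunction R) * (1 - C ((p : R) ^ j) * X) = 1 := by
  ext k
  rw [mul_sub, mul_one, map_sub, mul_left_comm, coeff_C_mul, coeff_bellSeries]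
  have hpow (i : ℕ) : (pow j : ArithmeticFunction R) (p ^ i) = (p : R) ^ (i * j) := by
    simp [pow_apply, hp.ne_zero, pow_mul]
  cases k with
  | zero => simp
  | succ k =>
    rw [coeff_succ_mul_X, coeff_bellSeries, hpow, hpow, coeff_one, if_neg k.succ_ne_zero]
    ring

theorem bellSeries_extendPow_pow_mul [CommRing R] (k : ℕ) [NeZero k] (j : ℕ) (hp : p.Prime) :
    bellSeries hp (extendPow k (pow j : ArithmeticFunction R)) * (1 - C ((p : R) ^ j) * X ^ k) =
      1 := by
  have h := congrArg (expand k (NeZero.ne k)) (bellSeries_pow_mul (R := R) j hp)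
  rwa [map_mul, map_sub, map_one, map_mul, expand_C, expand_X, ← bellSeries_extendPow] at h

theorem bellSeries_zeta_mul [CommRing R] (hp : p.Prime) :
    bellSeries hp (ζ : ArithmeticFunction R) * (1 - X) = 1 := by
  simpa [pow_zero_eq_zeta] using bellSeries_pow_mul (R := R) 0 hp

theorem bellSeries_moebius (hp : p.Prime) : bellSeries hp μ = 1 - X :=
  left_inv_eq_right_inv (by rw [← map_mul, moebius_mul_coe_zeta, map_one]) (bellSeries_zeta_mul hp)

end BellSeries

section Decimation

open PowerSeries

variable {R : Type*} [CommRing R]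

/-- Decimation `∑ aₙ X ^ n ↦ ∑ aₖₙ X ^ n` of power series: the effect on Bell series of restricting
an arithmetic function to `k`-th powers. -/
noncomputable def decimate (k : ℕ) : R⟦X⟧ →ₗ[R] R⟦X⟧ where
  toFun A := mk fun n ↦ coeff (k * n) A
  map_add' A B := by ext; simp
  map_smul' a A := by ext; simp

theorem coeff_decimate (k n : ℕ) (A : R⟦X⟧) : coeff n (decimate k A) = coeff (k * n) A := by
  simp [decimate]

theorem bellSeries_compPow (k : ℕ) [NeZero k] {p : ℕ} (hp : p.Prime) (g : ArithmeticFunction R) :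
    bellSeries hp (compPow k g) = decimate k (bellSeries hp g) := by
  ext n
  rw [coeff_bellSeries, compPow_apply, coeff_decimate, coeff_bellSeries, ← pow_mul, mul_comm]

theorem decimate_mul_expand {k : ℕ} (hk : k ≠ 0) (A B : R⟦X⟧) :
    decimate k (A * expand k hk B) = decimate k A * B := by
  ext n
  rw [coeff_decimate, coeff_mul, coeff_mul]
  symm
  refine Finset.sum_of_injOn (fun x ↦ (k * x.1, k * x.2)) ?_ ?_ ?_ ?_
  · rintro ⟨a, b⟩ - ⟨c, d⟩ - h
    simpa [hk] using h
  · rintro ⟨a, b⟩ hab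
    simpa [← mul_add, hk] using hab
  · rintro ⟨a, b⟩ hab hnot
    rw [coeff_expand_of_not_dvd, mul_zero]
    rintro ⟨d, rfl⟩
    have hab : a + k * d = k * n := Finset.HasAntidiagonal.mem_antidiagonal.1 hab
    obtain ⟨c, rfl⟩ : k ∣ a := (Nat.dvd_add_left ⟨d, rfl⟩).1 ⟨n, hab⟩
    refine hnot ⟨(c, d), ?_, rfl⟩
    simpa [← mul_add, hk] using hab
  · rintro ⟨a, b⟩ -
    rw [coeff_decimate, coeff_expand_mul]

theorem decimate_X_pow_of_not_dvd {k r : ℕ} (h : ¬ k ∣ r) : decimate k (X ^ r : R⟦X⟧) = 0 := by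
  ext n
  rw [coeff_decimate, coeff_X_pow, if_neg fun hr ↦ h ⟨n, hr.symm⟩, (coeff n).map_zero]

theorem decimate_expand {k : ℕ} (hk : k ≠ 0) (B : R⟦X⟧) : decimate k (expand k hk B) = B := by
  ext n
  rw [coeff_decimate, coeff_expand_mul]

/-- The numerator, over the denominator `(1 - X) ^ 3 * (1 - q ^ 3 X ^ 2)`, of the Bell series at a
prime `q` of `n ↦ ∑ s(m₁, m₂)`, the sum being over `m₁ * m₂ = n ^ 3`. -/
noncomputable def localNumerator (q : R) : R⟦X⟧ :=
  1 + C (13 + 4 * q) * X + C (4 + 13 * q + 9 * q ^ 2) * X ^ 2 + C (q + 9 * q ^ 2) * X ^ 3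

theorem decimate_three_mul (q : R) {G : R⟦X⟧}
    (hG : G * ((1 - X) ^ 4 * (1 - C q * X ^ 2)) = 1 - X ^ 2) :
    decimate 3 G * ((1 - X) ^ 4 * (1 - C (q ^ 3) * X ^ 2)) = (1 - X) * localNumerator q := by
  -- Multiplying by `(1 + X + X ^ 2) ^ 4 * (1 + q X ^ 2 + q ^ 2 X ^ 4)` turns the denominator of `G`
  -- into a power series in `X ^ 3`, which commutes with decimation.
  have split : G * expand 3 three_ne_zero ((1 - X) ^ 4 * (1 - C (q ^ 3) * X ^ 2)) =
      expand 3 three_ne_zero ((1 - X) * localNumerator q) +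
      X ^ 1 * expand 3 three_ne_zero ((1 - X) * (4 + C (13 + 9 * q + q ^ 2) * X +
        C (1 + 9 * q + 13 * q ^ 2) * X ^ 2 + C (4 * q ^ 2) * X ^ 3)) +
      X ^ 2 * expand 3 three_ne_zero ((1 - X) * (C (9 + q) + C (9 + 13 * q + 4 * q ^ 2) * X +
        C (4 * q + 13 * q ^ 2) * X ^ 2 + C (q ^ 2) * X ^ 3)) := by
    simp only [localNumerator, map_add, map_sub, map_mul, map_pow, map_one, map_ofNat, expand_C,
      expand_X]
    linear_combination (1 + X + X ^ 2) ^ 4 * (1 + C q * X ^ 2 + C q ^ 2 * X ^ 4) * hG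
  have h := congrArg (decimate 3) split
  simpa only [map_add, decimate_mul_expand, decimate_expand,
    decimate_X_pow_of_not_dvd (R := R) (show ¬ 3 ∣ 1 by decide),
    decimate_X_pow_of_not_dvd (R := R) (show ¬ 3 ∣ 2 by decide), zero_mul, add_zero] using h

end Decimation

section CorrectingFactor

open PowerSeries

variable {R : Type*} [CommSemiring R]

/-- The arithmetic function `n ↦ ∏ coeff k (B p)`, over the prime powers `p ^ k` exactly dividing
`n`: the multiplicative function with prescribed Bell series. -/
noncomputable def ofBellSeries (B : ℕ → R⟦X⟧) : ArithmeticFunction R :=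
  ⟨fun n ↦ if n = 0 then 0 else n.factorization.prod fun p k ↦ coeff k (B p), by simp⟩

theorem ofBellSeries_apply (B : ℕ → R⟦X⟧) {n : ℕ} (hn : n ≠ 0) :
    ofBellSeries B n = n.factorization.prod fun p k ↦ coeff k (B p) :=
  if_neg hn

theorem isMultiplicative_ofBellSeries (B : ℕ → R⟦X⟧) : (ofBellSeries B).IsMultiplicative := by
  refine IsMultiplicative.iff_ne_zero.2 ⟨by simp [ofBellSeries_apply], fun {m n} hm hn hmn ↦ ?_⟩
  rw [ofBellSeries_apply B hm, ofBellSeries_apply B hn, ofBellSeries_apply B (mul_ne_zero hm hn),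
    Nat.factorization_mul_of_coprime hmn, Finsupp.prod_add_index_of_disjoint]
  simpa using hmn.disjoint_primeFactors

theorem ofBellSeries_prime_pow (B : ℕ → R⟦X⟧) {p : ℕ} (hp : p.Prime)
    (hB : constantCoeff (B p) = 1) (k : ℕ) : ofBellSeries B (p ^ k) = coeff k (B p) := by
  rw [ofBellSeries_apply B (pow_ne_zero k hp.ne_zero), hp.factorization_pow,
    Finsupp.prod_single_index (by simpa using hB)]

theorem bellSeries_ofBellSeries (B : ℕ → R⟦X⟧) {p : ℕ} (hp : p.Prime)
    (hB : constantCoeff (B p) = 1) : bellSeries hp (ofBellSeries B) = B p := by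
  ext k
  rw [coeff_bellSeries, ofBellSeries_prime_pow B hp hB]

/-- The Bell series at a prime `q` of `residualFactor`. -/
noncomputable def residualSeries (q : ℤ) : ℤ⟦X⟧ :=
  localNumerator q * (1 - C q * X) ^ 4

theorem constantCoeff_residualSeries (q : ℤ) : constantCoeff (residualSeries q) = 1 := by
  simp [residualSeries, localNumerator]

/-- What is left of `n ↦ ∑ s(m₁, m₂)`, the sum being over `m₁ * m₂ = n ^ 3`, after division by the
factors with Dirichlet series `ζ(s) ^ 3`, `ζ(s - 1) ^ 4` and `ζ(2 s - 3)`. -/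
noncomputable def residualFactor : ArithmeticFunction ℤ :=
  ofBellSeries fun p ↦ residualSeries p

theorem isMultiplicative_residualFactor : residualFactor.IsMultiplicative :=
  isMultiplicative_ofBellSeries _

/-- The arithmetic function whose Dirichlet series at `3 s` is the correcting factor
`∑ h(n) n ^ (-s)`. -/
noncomputable def correctingFactor : ArithmeticFunction ℤ :=
  ζ ^ 3 * residualFactor

theorem isMultiplicative_convolute_numSubgroups :
    (convolute fun m n ↦ (numSubgroups m n : ℤ)).IsMultiplicative := by
  rw [convolute_numSubgroups]
  exact isMultiplicative_zeta.natCast.pow.mul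
    (isMultiplicative_extendPow (isMultiplicative_moebius.mul isMultiplicative_pow.natCast))

theorem bellSeries_convolute_numSubgroups_mul {p : ℕ} (hp : p.Prime) :
    bellSeries hp (convolute fun m n ↦ (numSubgroups m n : ℤ)) *
      ((1 - X) ^ 4 * (1 - C (p : ℤ) * X ^ 2)) = 1 - X ^ 2 := by
  have hζ := bellSeries_zeta_mul (R := ℤ) hp
  have hpow := bellSeries_extendPow_pow_mul (R := ℤ) 2 1 hp
  rw [bellSeries_extendPow, pow_one] at hpow
  rw [convolute_numSubgroups, map_mul, map_pow, bellSeries_extendPow, map_mul, bellSeries_moebius,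
    map_mul, map_sub, map_one, expand_X]
  set Z := bellSeries hp (ζ : ArithmeticFunction ℤ)
  set P := expand 2 two_ne_zero (bellSeries hp (pow 1 : ArithmeticFunction ℤ))
  calc Z ^ 4 * ((1 - X ^ 2) * P) * ((1 - X) ^ 4 * (1 - C (p : ℤ) * X ^ 2))
    _ = (Z * (1 - X)) ^ 4 * (P * (1 - C (p : ℤ) * X ^ 2)) * (1 - X ^ 2) := by ring
    _ = 1 - X ^ 2 := by rw [hζ, hpow, one_pow, one_mul, one_mul]

theorem bellSeries_residualFactor {p : ℕ} (hp : p.Prime) :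
    bellSeries hp residualFactor = localNumerator (p : ℤ) * (1 - C (p : ℤ) * X) ^ 4 :=
  bellSeries_ofBellSeries _ hp (constantCoeff_residualSeries p)

theorem compPow_three_convolute_numSubgroups :
    compPow 3 (convolute fun m n ↦ (numSubgroups m n : ℤ)) =
      (pow 1 : ArithmeticFunction ℤ) ^ 4 * extendPow 2 (pow 3 : ArithmeticFunction ℤ) *
        correctingFactor := by
  refine eq_of_forall_bellSeries_eq
    (isMultiplicative_compPow isMultiplicative_convolute_numSubgroups)
    ((isMultiplicative_pow.natCast.pow.mul
      (isMultiplicative_extendPow isMultiplicative_pow.natCast)).mul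
      (isMultiplicative_zeta.natCast.pow.mul isMultiplicative_residualFactor)) fun p hp ↦ ?_
  have hF := decimate_three_mul (p : ℤ) (bellSeries_convolute_numSubgroups_mul hp)
  have hζ := bellSeries_zeta_mul (R := ℤ) hp
  have hid := bellSeries_pow_mul (R := ℤ) 1 hp
  have hcube := bellSeries_extendPow_pow_mul (R := ℤ) 2 3 hp
  rw [pow_one] at hid
  simp only [correctingFactor, map_mul, map_pow (bellSeries hp), bellSeries_compPow,
    bellSeries_residualFactor hp]
  set D := decimate 3 (bellSeries hp (convolute fun m n ↦ (numSubgroups m n : ℤ)))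
  set Z := bellSeries hp (ζ : ArithmeticFunction ℤ)
  set I := bellSeries hp (pow 1 : ArithmeticFunction ℤ)
  set S := bellSeries hp (extendPow 2 (pow 3 : ArithmeticFunction ℤ))
  calc D
    _ = D * (Z * (1 - X)) ^ 4 * (S * (1 - C ((p : ℤ) ^ 3) * X ^ 2)) := by
      rw [hζ, hcube, one_pow, mul_one, mul_one]
    _ = Z ^ 4 * S * (D * ((1 - X) ^ 4 * (1 - C ((p : ℤ) ^ 3) * X ^ 2))) := by ring
    _ = (Z * (1 - X)) * Z ^ 3 * S * localNumerator (p : ℤ) := by rw [hF]; ring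
    _ = Z ^ 3 * S * localNumerator (p : ℤ) * (I * (1 - C (p : ℤ) * X)) ^ 4 := by
      rw [hζ, hid, one_pow, one_mul, mul_one]
    _ = I ^ 4 * S * (Z ^ 3 * (localNumerator (p : ℤ) * (1 - C (p : ℤ) * X) ^ 4)) := by ring

end CorrectingFactor

section Summability

theorem sum_range_succ_le_prod_tsum_prime_pow {u : ℕ → ℝ} (hu : ∀ n, 0 ≤ u n) (hu₁ : u 1 = 1)
    (hmul : ∀ {m n : ℕ}, m.Coprime n → u (m * n) = u m * u n)
    (hsum : ∀ {p : ℕ}, p.Prime → Summable fun k ↦ u (p ^ k)) (N : ℕ) :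
    ∑ n ∈ Finset.range N, u (n + 1) ≤ ∏ p ∈ (N + 1).primesBelow, ∑' k, u (p ^ k) := by
  set S := (N + 1).smoothNumbers
  have hS : HasSum (S.indicator u) (∏ p ∈ (N + 1).primesBelow, ∑' k, u (p ^ k)) :=
    hasSum_subtype_iff_indicator.1
      (EulerProduct.summable_and_hasSum_smoothNumbers_prod_primesBelow_tsum hu₁ hmul
        (fun hp ↦ (hsum hp).norm) (N + 1)).2
  have hind (n : ℕ) : 0 ≤ S.indicator u n := Set.indicator_nonneg (fun n _ ↦ hu n) n
  calc ∑ n ∈ Finset.range N, u (n + 1)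
    _ = ∑ n ∈ Finset.range N, S.indicator u (n + 1) := Finset.sum_congr rfl fun n hn ↦
      (Set.indicator_of_mem (Nat.mem_smoothNumbers_of_lt n.succ_pos
        (Nat.succ_lt_succ (Finset.mem_range.1 hn))) u).symm
    _ ≤ ∑ n ∈ Finset.range (N + 1), S.indicator u n := by
      rw [Finset.sum_range_succ']
      exact le_add_of_nonneg_right (hind 0)
    _ ≤ ∏ p ∈ (N + 1).primesBelow, ∑' k, u (p ^ k) := sum_le_hasSum _ (fun n _ ↦ hind n) hS

theorem summable_of_summable_prime_pow {u : ℕ → ℝ} (hu : ∀ n, 0 ≤ u n) (hu₁ : u 1 = 1)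
    (hmul : ∀ {m n : ℕ}, m.Coprime n → u (m * n) = u m * u n)
    (hsum : Summable fun x : Nat.Primes × ℕ ↦ u (x.1 ^ (x.2 + 1))) : Summable u := by
  have hpow {p : ℕ} (hp : p.Prime) : Summable fun k ↦ u (p ^ k) :=
    (summable_nat_add_iff 1).1 (hsum.prod_factor ⟨p, hp⟩)
  set b : ℕ → ℝ := fun p ↦ ∑' k, u (p ^ (k + 1))
  have euler_factor_le {p : ℕ} (hp : p.Prime) : ∑' k, u (p ^ k) ≤ Real.exp (b p) := by
    rw [(hpow hp).tsum_eq_zero_add, pow_zero, hu₁, add_comm]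
    exact Real.add_one_le_exp _
  refine (summable_nat_add_iff 1).1 (summable_of_sum_range_le
    (c := Real.exp (∑' p : Nat.Primes, b p)) (fun n ↦ hu _) fun N ↦ ?_)
  calc ∑ n ∈ Finset.range N, u (n + 1)
    _ ≤ ∏ p ∈ (N + 1).primesBelow, ∑' k, u (p ^ k) :=
      sum_range_succ_le_prod_tsum_prime_pow hu hu₁ hmul hpow N
    _ ≤ ∏ p ∈ (N + 1).primesBelow, Real.exp (b p) :=
      Finset.prod_le_prod (fun _ _ ↦ tsum_nonneg fun _ ↦ hu _)
        fun p hp ↦ euler_factor_le (Nat.prime_of_mem_primesBelow hp)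
    _ = Real.exp (∑ p ∈ (N + 1).primesBelow.subtype Nat.Prime, b p) := by
      rw [← Real.exp_sum, Finset.sum_subtype_of_mem b fun p ↦ Nat.prime_of_mem_primesBelow]
    _ ≤ Real.exp (∑' p : Nat.Primes, b p) :=
      Real.exp_le_exp.2 (Summable.sum_le_tsum (ι := Nat.Primes) _
        (fun _ _ ↦ tsum_nonneg fun _ ↦ hu _) hsum.prod)

theorem norm_term_prime_pow_le {f : ArithmeticFunction ℂ} {C : ℝ} {s : ℂ} (hs : 1 ≤ s.re) {p : ℕ}
    (hp : p.Prime) (h₁ : ‖f p‖ ≤ C) (h : ∀ k, ‖f (p ^ k)‖ ≤ C * p ^ k) (k : ℕ) :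
    ‖LSeries.term f s (p ^ (k + 1))‖ ≤
      C * ((p : ℝ) ^ (-s.re) + (p : ℝ) ^ (2 - 2 * s.re) * ((2 : ℝ) ^ (1 - s.re))⁻¹) *
        ((2 : ℝ) ^ (1 - s.re)) ^ k := by
  have hp₀ : (0 : ℝ) < p := mod_cast hp.pos
  have hC : 0 ≤ C := (norm_nonneg _).trans h₁
  rw [LSeries.norm_term_eq, if_neg (pow_ne_zero _ hp.ne_zero), Nat.cast_pow]
  rcases k with _ | k
  · have : 0 ≤ C * ((p : ℝ) ^ (2 - 2 * s.re) * ((2 : ℝ) ^ (1 - s.re))⁻¹) := by positivity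
    calc ‖f (p ^ (0 + 1))‖ / ((p : ℝ) ^ (0 + 1)) ^ s.re
      _ = ‖f p‖ * (p : ℝ) ^ (-s.re) := by rw [zero_add, pow_one, pow_one, Real.rpow_neg hp₀.le]; rfl
      _ ≤ C * (p : ℝ) ^ (-s.re) := by gcongr
      _ ≤ _ := by rw [pow_zero, mul_one, mul_add]; exact le_add_of_nonneg_right this
  · have hle : (p : ℝ) ^ (1 - s.re) ≤ 2 ^ (1 - s.re) :=
      Real.rpow_le_rpow_of_nonpos two_pos (mod_cast hp.two_le) (sub_nonpos.2 hs)
    have hr : (2 : ℝ) ^ (1 - s.re) ≠ 0 := by positivity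
    calc ‖f (p ^ (k + 2))‖ / ((p : ℝ) ^ (k + 2)) ^ s.re
      _ ≤ C * (p : ℝ) ^ (k + 2) / ((p : ℝ) ^ (k + 2)) ^ s.re := by gcongr; exact h (k + 2)
      _ = C * ((p : ℝ) ^ (1 - s.re)) ^ (k + 2) := by
        rw [mul_div_assoc, Real.rpow_sub hp₀, Real.rpow_one, div_pow, Real.rpow_pow_comm hp₀.le]
      _ = C * ((p : ℝ) ^ (2 - 2 * s.re) * ((p : ℝ) ^ (1 - s.re)) ^ k) := by
        rw [pow_add, mul_comm (_ ^ k), ← Real.rpow_mul_natCast hp₀.le (1 - s.re) 2]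
        ring_nf
      _ ≤ C * ((p : ℝ) ^ (2 - 2 * s.re) * ((2 : ℝ) ^ (1 - s.re)) ^ k) := by gcongr
      _ = C * ((p : ℝ) ^ (2 - 2 * s.re) * ((2 : ℝ) ^ (1 - s.re))⁻¹) *
          ((2 : ℝ) ^ (1 - s.re)) ^ (k + 1) := by field_simp; ring
      _ ≤ _ := by gcongr; exact le_add_of_nonneg_left (by positivity)

theorem LSeriesSummable_of_norm_prime_pow_le {f : ArithmeticFunction ℂ} (hf : f.IsMultiplicative)
    {C : ℝ} (h₁ : ∀ p : ℕ, p.Prime → ‖f p‖ ≤ C)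
    (h : ∀ p : ℕ, p.Prime → ∀ k, ‖f (p ^ k)‖ ≤ C * p ^ k) {s : ℂ} (hs : 3 / 2 < s.re) :
    LSeriesSummable f s := by
  refine .of_norm (summable_of_summable_prime_pow (fun n ↦ norm_nonneg _) ?_ ?_ ?_)
  · simp [hf.map_one]
  · intro m n hmn
    rw [← norm_mul]
    rcases eq_or_ne m 0 with rfl | hm
    · simp
    rcases eq_or_ne n 0 with rfl | hn
    · simp
    rw [LSeries.term_of_ne_zero hm, LSeries.term_of_ne_zero hn,
      LSeries.term_of_ne_zero (mul_ne_zero hm hn), hf.map_mul_of_coprime hmn, Nat.cast_mul,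
      Complex.natCast_mul_natCast_cpow, div_mul_div_comm]
  · have hgeom : Summable fun k : ℕ ↦ ((2 : ℝ) ^ (1 - s.re)) ^ k :=
      summable_geometric_of_lt_one (by positivity)
        (Real.rpow_lt_one_of_one_lt_of_neg one_lt_two (by linarith))
    have hprimes : Summable fun p : Nat.Primes ↦
        C * ((p : ℝ) ^ (-s.re) + (p : ℝ) ^ (2 - 2 * s.re) * ((2 : ℝ) ^ (1 - s.re))⁻¹) :=
      ((Nat.Primes.summable_rpow.2 (by linarith)).add
        ((Nat.Primes.summable_rpow.2 (by linarith)).mul_right _)).mul_left _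
    have hC : 0 ≤ C := (norm_nonneg _).trans (h₁ 2 Nat.prime_two)
    exact .of_nonneg_of_le (fun _ ↦ norm_nonneg _)
      (fun x ↦ norm_term_prime_pow_le (by linarith) x.1.2 (h₁ x.1 x.1.2) (h x.1 x.1.2) x.2)
      (hprimes.mul_of_nonneg hgeom
        (fun _ ↦ by positivity) fun _ ↦ by positivity)

end Summability

section CoefficientBounds

open PowerSeries

theorem abs_coeff_mul_one_sub_pow_le {R : Type*} [CommRing R] [LinearOrder R]
    [IsStrictOrderedRing R] {A : R⟦X⟧} {a q : R} (hA : ∀ k, |coeff k A| ≤ a * |q| ^ k) (n k : ℕ) :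
    |coeff k (A * (1 - C q * X) ^ n)| ≤ 2 ^ n * a * |q| ^ k := by
  induction n generalizing k with
  | zero => simpa using hA k
  | succ n ih =>
    have ha : 0 ≤ a := by simpa using (abs_nonneg _).trans (hA 0)
    rw [pow_succ (1 - C q * X), ← mul_assoc, mul_sub, mul_one, mul_left_comm, map_sub, coeff_C_mul]
    rcases k with _ | k
    · rw [coeff_zero_mul_X, mul_zero, sub_zero]
      refine (ih 0).trans ?_
      gcongr <;> norm_num
    · calc |coeff (k + 1) (A * (1 - C q * X) ^ n) - q * coeff (k + 1) (A * (1 - C q * X) ^ n * X)|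
        _ ≤ |coeff (k + 1) (A * (1 - C q * X) ^ n)| + |q| * |coeff k (A * (1 - C q * X) ^ n)| := by
          rw [coeff_succ_mul_X, ← abs_mul]
          exact abs_sub _ _
        _ ≤ 2 ^ n * a * |q| ^ (k + 1) + |q| * (2 ^ n * a * |q| ^ k) := by
          gcongr
          exacts [ih (k + 1), ih k]
        _ = 2 ^ (n + 1) * a * |q| ^ (k + 1) := by ring

theorem coeff_localNumerator {R : Type*} [CommRing R] (q : R) (k : ℕ) :
    coeff k (localNumerator q) =
      (if k = 0 then 1 else 0) + (13 + 4 * q) * (if k = 1 then 1 else 0) +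
        (4 + 13 * q + 9 * q ^ 2) * (if k = 2 then 1 else 0) +
        (q + 9 * q ^ 2) * (if k = 3 then 1 else 0) := by
  simp only [localNumerator, (coeff k).map_add, coeff_C_mul, coeff_X, coeff_one, coeff_X_pow]

theorem abs_coeff_localNumerator_le {q : ℤ} (hq : 1 ≤ q) (k : ℕ) :
    |coeff k (localNumerator q)| ≤ 26 * |q| ^ k := by
  have h₂ : q ≤ q ^ 2 := le_self_pow₀ hq two_ne_zero
  have h₃ : q ^ 2 ≤ q ^ 3 := pow_le_pow_right₀ hq (by norm_num)
  rw [abs_of_nonneg (zero_le_one.trans hq)]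
  have hk : 0 ≤ q ^ k := pow_nonneg (zero_le_one.trans hq) k
  rw [coeff_localNumerator, abs_le]
  constructor <;> rcases k with _ | _ | _ | _ | k <;> grind

theorem abs_coeff_residualSeries_le {q : ℤ} (hq : 1 ≤ q) (k : ℕ) :
    |coeff k (residualSeries q)| ≤ 416 * |q| ^ k :=
  abs_coeff_mul_one_sub_pow_le (abs_coeff_localNumerator_le hq) 4 k

theorem coeff_one_residualSeries (q : ℤ) : coeff 1 (residualSeries q) = 13 := by
  have : constantCoeff (localNumerator q) = 1 := by simp [localNumerator]
  simp [residualSeries, coeff_one_mul, coeff_localNumerator, coeff_one_pow, this]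

end CoefficientBounds

section DirichletSeries

theorem intCoe_pow {R : Type*} [Ring R] (f : ArithmeticFunction ℤ) (n : ℕ) :
    ((f ^ n : ArithmeticFunction ℤ) : ArithmeticFunction R) = (f : ArithmeticFunction R) ^ n := by
  induction n with
  | zero => simp
  | succ n ih => rw [pow_succ, pow_succ, intCoe_mul, ih]

theorem intCoe_extendPow {R : Type*} [Ring R] (k : ℕ) [NeZero k] (f : ArithmeticFunction ℤ) :
    ((extendPow k f : ArithmeticFunction ℤ) : ArithmeticFunction R) =
      extendPow k (f : ArithmeticFunction R) := by
  ext n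
  rw [intCoe_apply]
  by_cases h : ∃ m, m ^ k = n
  · obtain ⟨m, rfl⟩ := h
    rw [extendPow_apply_pow, extendPow_apply_pow, intCoe_apply]
  · rw [extendPow_apply_of_forall_ne _ (not_exists.1 h),
      extendPow_apply_of_forall_ne _ (not_exists.1 h), Int.cast_zero]

theorem intCoe_convolute {R : Type*} [Ring R] (F : ℕ → ℕ → ℤ) :
    ((convolute F : ArithmeticFunction ℤ) : ArithmeticFunction R) =
      convolute fun m n ↦ (F m n : R) := by
  ext n
  simp only [intCoe_apply, convolute_apply, Int.cast_sum]

variable {f : ArithmeticFunction ℂ} {s a : ℂ}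

theorem LSeriesSummable_iff_summable_norm_div :
    LSeriesSummable f s ↔ Summable fun n : ℕ ↦ ‖f n‖ / (n : ℝ) ^ s.re := by
  rw [LSeriesSummable, ← summable_norm_iff]
  refine summable_congr fun n ↦ ?_
  rw [LSeries.norm_term_eq]
  split_ifs with hn
  · simp [hn]
  · rfl

theorem LSeries_eq_tsum_div : LSeries f s = ∑' n : ℕ, f n / (n : ℂ) ^ s := by
  refine tsum_congr fun n ↦ ?_
  rw [LSeries.term_def]
  split_ifs with hn
  · simp [hn]
  · rfl

theorem LSeriesHasSum_pow (hf : LSeriesHasSum f s a) (n : ℕ) :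
    LSeriesHasSum ⇑(f ^ n) s (a ^ n) := by
  induction n with
  | zero =>
    have h : LSeriesHasSum LSeries.delta s 1 := by
      simpa only [LSeriesHasSum, funext (LSeries.term_delta s)] using hasSum_ite_eq 1 (1 : ℂ)
    simpa only [pow_zero, ← one_eq_delta] using h
  | succ n ih => rw [pow_succ, pow_succ]; exact LSeriesHasSum_mul ih hf

theorem LSeriesHasSum_coe_pow (j : ℕ) (hs : j + 1 < s.re) :
    LSeriesHasSum (pow j : ArithmeticFunction ℂ) s (riemannZeta (s - j)) := by
  have h : LSeriesHasSum 1 (s - j) (riemannZeta (s - j)) :=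
    LSeriesHasSum_one (by simpa [lt_sub_iff_add_lt'] using hs)
  unfold LSeriesHasSum at h ⊢
  convert h using 1
  ext n
  rcases eq_or_ne n 0 with rfl | hn
  · simp
  have hn' : (n : ℂ) ≠ 0 := Nat.cast_ne_zero.2 hn
  rw [LSeries.term_of_ne_zero hn, LSeries.term_of_ne_zero hn, Complex.cpow_sub _ _ hn']
  simp [pow_apply, hn]

theorem LSeriesHasSum_extendPow_iff (k : ℕ) [NeZero k] :
    LSeriesHasSum (extendPow k f) s a ↔ LSeriesHasSum f (k * s) a := by
  unfold LSeriesHasSum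
  rw [← (Nat.pow_left_injective (NeZero.ne k)).hasSum_iff]
  · refine iff_of_eq (congrArg (HasSum · a) (funext fun n ↦ ?_))
    rcases eq_or_ne n 0 with rfl | hn
    · simp [zero_pow (NeZero.ne k)]
    rw [Function.comp_apply, LSeries.term_of_ne_zero (pow_ne_zero k hn),
      LSeries.term_of_ne_zero hn, extendPow_apply_pow, Nat.cast_pow,
      Complex.natCast_cpow_natCast_mul]
  · intro n hn
    rw [LSeries.term_def₀ (extendPow k f).map_zero,
      extendPow_apply_of_forall_ne f fun m hm ↦ hn ⟨m, hm⟩, zero_mul]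

end DirichletSeries

section DoubleSeries

theorem hasSum_prod_of_hasSum_sum_divisorsAntidiagonal {E : Type*} [NormedAddCommGroup E]
    [CompleteSpace E] {T : ℕ × ℕ → E} {a : E} (hT : ∀ x, x.1 * x.2 = 0 → T x = 0)
    (hnorm : Summable fun n : ℕ ↦ ∑ x ∈ n.divisorsAntidiagonal, ‖T x‖)
    (h : HasSum (fun n : ℕ ↦ ∑ x ∈ n.divisorsAntidiagonal, T x) a) : HasSum T a := by
  let j : (Σ n : ℕ, n.divisorsAntidiagonal) → ℕ × ℕ := fun x ↦ x.2
  have hj : j.Injective := by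
    rintro ⟨m, x, hx⟩ ⟨n, y, hy⟩ (rfl : x = y)
    obtain rfl : m = n :=
      (Nat.mem_divisorsAntidiagonal.1 hx).1.symm.trans (Nat.mem_divisorsAntidiagonal.1 hy).1
    rfl
  have hsummable : Summable fun x ↦ ‖T (j x)‖ := by
    refine (summable_sigma_of_nonneg fun _ ↦ norm_nonneg _).2 ⟨fun n ↦ .of_finite, ?_⟩
    exact hnorm.congr fun n ↦ (n.divisorsAntidiagonal.tsum_subtype fun x ↦ ‖T x‖).symm
  refine (hj.hasSum_iff fun x hx ↦ hT x ?_).1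
    (h.sigma_of_hasSum (fun n ↦ n.divisorsAntidiagonal.hasSum T) hsummable.of_norm)
  by_contra hx₀
  exact hx ⟨⟨x.1 * x.2, x, Nat.mem_divisorsAntidiagonal.2 ⟨rfl, hx₀⟩⟩, rfl⟩

theorem sum_norm_div_cpow_eq_norm_term_convolute (F : ℕ → ℕ → ℂ) (s : ℂ) (n : ℕ) :
    ∑ x ∈ n.divisorsAntidiagonal, ‖F x.1 x.2 / (n : ℂ) ^ s‖ =
      ‖LSeries.term (convolute fun m n ↦ (‖F m n‖ : ℂ)) s n‖ := by
  rcases eq_or_ne n 0 with rfl | hn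
  · simp
  rw [LSeries.term_of_ne_zero hn, convolute_apply, ← Complex.ofReal_sum, norm_div,
    Complex.norm_of_nonneg (Finset.sum_nonneg fun _ _ ↦ norm_nonneg _), Finset.sum_div]
  simp only [norm_div]

theorem sum_div_cpow_eq_term_convolute (F : ℕ → ℕ → ℂ) (s : ℂ) (n : ℕ) :
    ∑ x ∈ n.divisorsAntidiagonal, F x.1 x.2 / (n : ℂ) ^ s = LSeries.term (convolute F) s n := by
  rcases eq_or_ne n 0 with rfl | hn
  · simp
  rw [LSeries.term_of_ne_zero hn, convolute_apply, Finset.sum_div]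

theorem hasSum_div_mul_cpow {F : ℕ → ℕ → ℂ} {s : ℂ}
    (hF : LSeriesSummable (convolute fun m n ↦ (‖F m n‖ : ℂ)) s) :
    HasSum (fun x : ℕ × ℕ ↦
        if 0 < x.1 ∧ 0 < x.2 then F x.1 x.2 / ((x.1 * x.2 : ℕ) : ℂ) ^ s else 0)
      (LSeries (convolute F) s) := by
  set T : ℕ × ℕ → ℂ := fun x ↦
    if 0 < x.1 ∧ 0 < x.2 then F x.1 x.2 / ((x.1 * x.2 : ℕ) : ℂ) ^ s else 0
  have hT {n : ℕ} {x : ℕ × ℕ} (hx : x ∈ n.divisorsAntidiagonal) :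
      T x = F x.1 x.2 / (n : ℂ) ^ s := by
    have hx₀ := Nat.ne_zero_of_mem_divisorsAntidiagonal hx
    simp only [T, if_pos (And.intro (Nat.pos_of_ne_zero hx₀.1) (Nat.pos_of_ne_zero hx₀.2)),
      (Nat.mem_divisorsAntidiagonal.1 hx).1]
  have hnorm (n : ℕ) : ∑ x ∈ n.divisorsAntidiagonal, ‖T x‖ =
      ‖LSeries.term (convolute fun m n ↦ (‖F m n‖ : ℂ)) s n‖ := by
    rw [← sum_norm_div_cpow_eq_norm_term_convolute]
    exact Finset.sum_congr rfl fun x hx ↦ by rw [hT hx]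
  have hsum (n : ℕ) : ∑ x ∈ n.divisorsAntidiagonal, T x = LSeries.term (convolute F) s n := by
    rw [← sum_div_cpow_eq_term_convolute]
    exact Finset.sum_congr rfl fun x hx ↦ hT hx
  have hconv : LSeriesSummable (convolute F) s := by
    refine .of_norm (.of_nonneg_of_le (fun _ ↦ norm_nonneg _) (fun n ↦ ?_) hF.norm)
    rw [← hsum, ← hnorm]
    exact norm_sum_le _ _
  refine hasSum_prod_of_hasSum_sum_divisorsAntidiagonal (fun x hx ↦ if_neg ?_)
    (by simpa only [hnorm] using hF.norm) (by simp only [hsum]; exact hconv.hasSum)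
  rintro ⟨h₁, h₂⟩
  exact (Nat.mul_pos h₁ h₂).ne' hx

end DoubleSeries

section SubgroupSeries

theorem LSeriesSummable_residualFactor {s : ℂ} (hs : 3 / 2 < s.re) :
    LSeriesSummable (residualFactor : ArithmeticFunction ℂ) s := by
  have hcoeff {p : ℕ} (hp : p.Prime) (k : ℕ) :
      ‖(residualFactor : ArithmeticFunction ℂ) (p ^ k)‖ =
        |PowerSeries.coeff k (residualSeries p)| := by
    rw [intCoe_apply, Complex.norm_intCast, residualFactor,
      ofBellSeries_prime_pow _ hp (constantCoeff_residualSeries p), Int.cast_abs]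
  refine LSeriesSummable_of_norm_prime_pow_le isMultiplicative_residualFactor.intCast
    (C := 416) (fun p hp ↦ ?_) (fun p hp k ↦ ?_) hs
  · have h := hcoeff hp 1
    rw [pow_one, coeff_one_residualSeries] at h
    rw [h]
    norm_num
  · rw [hcoeff hp]
    exact_mod_cast abs_coeff_residualSeries_le (Nat.one_le_cast.2 hp.one_le) k

theorem LSeriesSummable_correctingFactor {s : ℂ} (hs : 3 / 2 < s.re) :
    LSeriesSummable (correctingFactor : ArithmeticFunction ℂ) s := by
  have hζ : LSeriesHasSum (ζ : ArithmeticFunction ℂ) s (riemannZeta s) :=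
    LSeriesHasSum_zeta (by linarith)
  rw [correctingFactor, intCoe_mul, intCoe_pow, coe_coe]
  exact (LSeriesHasSum_mul (LSeriesHasSum_pow hζ 3)
    (LSeriesSummable_residualFactor hs).LSeriesHasSum).LSeriesSummable

theorem convolute_numSubgroups_ite_cube :
    (convolute fun m n ↦ if ∃ j, m * n = j ^ 3 then (numSubgroups m n : ℂ) else 0) =
      extendPow 3 ((pow 1 : ArithmeticFunction ℂ) ^ 4 * extendPow 2 (pow 3 : ArithmeticFunction ℂ) *
        (correctingFactor : ArithmeticFunction ℂ)) := by
  calc convolute fun m n ↦ if ∃ j, m * n = j ^ 3 then (numSubgroups m n : ℂ) else 0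
    _ = ((convolute fun m n ↦ if ∃ j, m * n = j ^ 3 then (numSubgroups m n : ℤ) else 0 :
        ArithmeticFunction ℤ) : ArithmeticFunction ℂ) := by
      rw [intCoe_convolute]
      push_cast
      rfl
    _ = _ := by
      rw [convolute_ite_eq_pow, compPow_three_convolute_numSubgroups]
      simp only [intCoe_extendPow, intCoe_mul, intCoe_pow, coe_coe]

theorem LSeriesHasSum_extendPow_correctingFactor {s : ℂ} (hs : 1 / 2 < s.re) :
    LSeriesHasSum (extendPow 3 (correctingFactor : ArithmeticFunction ℂ)) s
      (LSeries (correctingFactor : ArithmeticFunction ℂ) (3 * s)) := by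
  have hs₃ : 3 / 2 < (3 * s).re := by norm_num; linarith
  exact (LSeriesHasSum_extendPow_iff 3).2 (LSeriesSummable_correctingFactor hs₃).LSeriesHasSum

theorem LSeriesHasSum_convolute_numSubgroups_ite_cube {s : ℂ} (hs : 1 < s.re) :
    LSeriesHasSum
      (convolute fun m n ↦ if ∃ j, m * n = j ^ 3 then (numSubgroups m n : ℂ) else 0) s
      (riemannZeta (3 * s - 1) ^ 4 * riemannZeta (6 * s - 3) *
        LSeries (extendPow 3 (correctingFactor : ArithmeticFunction ℂ)) s) := by
  have hid : LSeriesHasSum (pow 1 : ArithmeticFunction ℂ) (3 * s) (riemannZeta (3 * s - 1)) := by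
    simpa using LSeriesHasSum_coe_pow 1 (s := 3 * s) (by norm_num; linarith)
  have hcube : LSeriesHasSum (pow 3 : ArithmeticFunction ℂ) (2 * (3 * s))
      (riemannZeta (6 * s - 3)) := by
    rw [← mul_assoc, show (2 : ℂ) * 3 = 6 by norm_num]
    exact LSeriesHasSum_coe_pow 3 (by norm_num; linarith)
  have hcor := LSeriesHasSum_extendPow_correctingFactor (s := s) (by linarith)
  rw [convolute_numSubgroups_ite_cube, hcor.LSeries_eq]
  exact (LSeriesHasSum_extendPow_iff 3).2 (LSeriesHasSum_mul (LSeriesHasSum_mul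
    (LSeriesHasSum_pow hid 4) ((LSeriesHasSum_extendPow_iff 2).2 hcube))
    ((LSeriesHasSum_extendPow_iff 3).1 hcor))

theorem hasSum_numSubgroups_div_mul_cpow {s : ℂ} (hs : 1 < s.re) :
    HasSum (fun x : ℕ × ℕ ↦
        if 0 < x.1 ∧ 0 < x.2 ∧ ∃ j, x.1 * x.2 = j ^ 3 then
          (numSubgroups x.1 x.2 : ℂ) / ((x.1 * x.2 : ℕ) : ℂ) ^ s else 0)
      (riemannZeta (3 * s - 1) ^ 4 * riemannZeta (6 * s - 3) *
        LSeries (extendPow 3 (correctingFactor : ArithmeticFunction ℂ)) s) := by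
  set F : ℕ → ℕ → ℂ := fun m n ↦ if ∃ j, m * n = j ^ 3 then (numSubgroups m n : ℂ) else 0
  have hF := LSeriesHasSum_convolute_numSubgroups_ite_cube hs
  have hnorm (m n : ℕ) : (‖F m n‖ : ℂ) = F m n := by
    simp only [F]
    split_ifs <;> simp
  have h : HasSum (fun x : ℕ × ℕ ↦
      if 0 < x.1 ∧ 0 < x.2 then F x.1 x.2 / ((x.1 * x.2 : ℕ) : ℂ) ^ s else 0)
      (LSeries (convolute F) s) :=
    hasSum_div_mul_cpow (by simpa only [hnorm] using hF.LSeriesSummable)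
  rw [hF.LSeries_eq] at h
  refine h.congr_fun fun x ↦ ?_
  simp only [F, ← and_assoc, ite_and, ite_div, zero_div]

end SubgroupSeries

theorem stmt3 : ∃ h : ℕ → ℝ,
    (∀ σ : ℝ, 1 / 2 < σ → Summable fun n : ℕ => |h n| / (n : ℝ) ^ σ) ∧
    ∀ s : ℂ, 1 < s.re →
      (∑' p : ℕ × ℕ,
          if 0 < p.1 ∧ 0 < p.2 ∧ ∃ n : ℕ, p.1 * p.2 = n ^ 3 then
            (numSubgroups p.1 p.2 : ℂ) / ((p.1 * p.2 : ℕ) : ℂ) ^ s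
          else 0)
        = riemannZeta (3 * s - 1) ^ 4 * riemannZeta (6 * s - 3) *
            ∑' n : ℕ, (h n : ℂ) / (n : ℂ) ^ s := by
  have hcast (n : ℕ) : extendPow 3 (correctingFactor : ArithmeticFunction ℂ) n =
      (extendPow 3 correctingFactor n : ℝ) := by
    rw [← intCoe_extendPow, intCoe_apply, Complex.ofReal_intCast]
  refine ⟨fun n ↦ extendPow 3 correctingFactor n, fun σ hσ ↦ ?_, fun s hs ↦ ?_⟩
  · have h := (LSeriesHasSum_extendPow_correctingFactor (s := σ) hσ).LSeriesSummable
    simpa only [LSeriesSummable_iff_summable_norm_div, hcast, Complex.norm_real, Real.norm_eq_abs,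
      Complex.ofReal_re] using h
  · simpa only [LSeries_eq_tsum_div, hcast] using (hasSum_numSubgroups_div_mul_cpow hs).tsum_eq
end

section
/- There is a constant C such that for all real x ≥ 2, | ∑_{1 ≤ u ≤ x^{1/3}} u · ψ(x/u²) | ≤ C x^{5/9} log x, where ψ(t) := t − ⌊t⌋ − 1/2 and the sum is over integers u with 1 ≤ u ≤ x^{1/3}. -/
/-!
On a dyadic range `u ≍ U`, the second differences of `x / u ^ 2` have order `T ^ (-3)`, where
`T ^ 3 ≍ U ^ 4 / x`. Cut the range into blocks `[m, m + q)`, where `q ≤ T` is the denominator of a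
Dirichlet approximation `a / q` to the slope at `m`. On such a block the values lie within
`O(1 / q)` of an arithmetic progression of step `a / q`, which runs through a complete residue
system modulo `q`, so `ψ` sums to `O(1)`. The slope grows at rate `T ^ (-3)`, so disjoint blocks
sharing the fraction `a / q` number `O(T ^ 2 / q ^ 2)`; counting the possible numerators and summing
over `q ≤ T` leaves `O((U / T) log x)` blocks. Partial summation restores the weight `u`, giving
`x ^ (1 / 3) * U ^ (2 / 3) * log x` for the dyadic range, and these bounds sum geometrically.
-/

open Finset
open scoped fwdDiff

/-- The sawtooth function `ψ`, i.e. the first Bernoulli polynomial extended periodically. -/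
noncomputable def sawtooth (t : ℝ) : ℝ := Int.fract t - 1 / 2

lemma abs_sawtooth_le (t : ℝ) : |sawtooth t| ≤ 1 / 2 := by
  have h₀ := Int.fract_nonneg t
  have h₁ := Int.fract_lt_one t
  rw [sawtooth, abs_le]
  constructor <;> linarith

lemma sawtooth_add_le (t : ℝ) {s : ℝ} (hs : 0 ≤ s) : sawtooth (t + s) ≤ sawtooth t + s := by
  have hfloor : (⌊t⌋ : ℝ) ≤ ⌊t + s⌋ := by
    exact_mod_cast Int.floor_mono (le_add_of_nonneg_right hs)
  unfold sawtooth Int.fract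
  linarith

section CompleteSums

variable {q : ℕ} [NeZero q]

lemma fract_div_natCast (s : ℝ) :
    Int.fract (s / q) = (((⌊s⌋ : ZMod q).val : ℝ) + Int.fract s) / q := by
  have hq : (0 : ℝ) < q := Nat.cast_pos.mpr (NeZero.pos q)
  have hval : ((⌊s⌋ : ZMod q).val : ℝ) + 1 ≤ q := by exact_mod_cast ZMod.val_lt _
  have hdivision : ((⌊s⌋ : ZMod q).val : ℝ) + q * (⌊s⌋ / (q : ℤ) : ℤ) = ⌊s⌋ := by
    exact_mod_cast (congrArg (· + _) (ZMod.val_intCast ⌊s⌋)).trans (Int.emod_add_mul_ediv _ _)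
  have hfract_lt := Int.fract_lt_one s
  refine Int.fract_eq_iff.mpr ⟨by positivity, (div_lt_one hq).mpr (by linarith), ⌊s⌋ / q, ?_⟩
  rw [div_sub_div_same, div_eq_iff hq.ne']
  linarith [Int.floor_add_fract s]

lemma sum_range_natCast_zmod {M : Type*} [AddCommMonoid M] (F : ZMod q → M) :
    ∑ j ∈ range q, F j = ∑ z, F z :=
  sum_nbij' (fun j ↦ (j : ZMod q)) ZMod.val (by simp) (by simp [ZMod.val_lt])
    (fun j hj ↦ ZMod.val_cast_of_lt (mem_range.mp hj)) (by simp) (by simp)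

lemma sum_zmod_val : ∑ z : ZMod q, (z.val : ℝ) = q * (q - 1) / 2 := by
  have hvals : ∑ z : ZMod q, (z.val : ℝ) = ∑ j ∈ range q, (j : ℝ) := by
    rw [← sum_range_natCast_zmod]
    exact sum_congr rfl fun j hj ↦ by rw [ZMod.val_cast_of_lt (mem_range.mp hj)]
  have hgauss : (∑ j ∈ range q, (j : ℝ)) * 2 = q * (q - 1) := by
    have := congrArg (Nat.cast (R := ℝ)) (sum_range_id_mul_two q)
    push_cast [Nat.cast_pred (NeZero.pos q)] at this
    exact this
  linarith

lemma sum_range_affine_zmod {M : Type*} [AddCommMonoid M] (F : ZMod q → M) {a : ℤ}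
    (ha : IsCoprime a q) (b : ℤ) :
    ∑ j ∈ range q, F ((b + a * j : ℤ) : ZMod q) = ∑ z, F z := by
  have hunit : IsUnit (a : ZMod q) := (ZMod.coe_int_isUnit_iff_isCoprime a q).mpr ha.symm
  have hbij : Function.Bijective fun z : ZMod q ↦ (b : ZMod q) + a * z :=
    (AddGroup.addLeft_bijective (b : ZMod q)).comp (IsUnit.isUnit_iff_mulLeft_bijective.mp hunit)
  rw [← hbij.sum_comp F, ← sum_range_natCast_zmod]
  push_cast
  rfl

lemma sum_sawtooth_add_mul_div {a : ℤ} (ha : IsCoprime a q) (t : ℝ) :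
    ∑ j ∈ range q, sawtooth (t + a * j / q) = sawtooth (q * t) := by
  have hq : (q : ℝ) ≠ 0 := NeZero.ne _
  have hterm (j : ℕ) : sawtooth (t + a * j / q) =
      (((⌊q * t⌋ + a * j : ℤ) : ZMod q).val + Int.fract (q * t)) / q - 1 / 2 := by
    have hcast : t + a * j / q = (q * t + (a * j : ℤ)) / q := by
      push_cast
      field_simp
    rw [sawtooth, hcast, fract_div_natCast, Int.floor_add_intCast, Int.fract_add_intCast]
  simp only [hterm]
  rw [sum_sub_distrib, ← sum_div, sum_add_distrib,
    sum_range_affine_zmod (fun z ↦ (z.val : ℝ)) ha, sum_zmod_val, sawtooth]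
  simp only [sum_const, card_range, nsmul_eq_mul]
  field_simp
  ring

lemma abs_sum_sawtooth_le_of_near_progression {a : ℤ} (ha : IsCoprime a q) {β ε : ℝ} {f : ℕ → ℝ}
    (hf : ∀ j ∈ range q, |f j - (β + a * j / q)| ≤ ε) :
    |∑ j ∈ range q, sawtooth (f j)| ≤ 1 / 2 + 2 * (q * ε) := by
  have hupper : ∑ j ∈ range q, sawtooth (f j) ≤
      ∑ j ∈ range q, (sawtooth (β - ε + a * j / q) + 2 * ε) := by
    refine sum_le_sum fun j hj ↦ ?_
    obtain ⟨h₁, h₂⟩ := abs_le.mp (hf j hj)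
    have h := sawtooth_add_le (β - ε + a * j / q) (s := f j - (β - ε + a * j / q)) (by linarith)
    rw [add_sub_cancel] at h
    linarith
  have hlower : ∑ j ∈ range q, (sawtooth (β + ε + a * j / q) - 2 * ε) ≤
      ∑ j ∈ range q, sawtooth (f j) := by
    refine sum_le_sum fun j hj ↦ ?_
    obtain ⟨h₁, h₂⟩ := abs_le.mp (hf j hj)
    have h := sawtooth_add_le (f j) (s := β + ε + a * j / q - f j) (by linarith)
    rw [add_sub_cancel] at h
    linarith
  rw [sum_add_distrib, sum_sawtooth_add_mul_div ha] at hupper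
  rw [sum_sub_distrib, sum_sawtooth_add_mul_div ha] at hlower
  simp only [sum_const, card_range, nsmul_eq_mul] at hupper hlower
  have h₁ := abs_le.mp (abs_sawtooth_le (q * (β - ε)))
  have h₂ := abs_le.mp (abs_sawtooth_le (q * (β + ε)))
  rw [abs_le]
  constructor <;> linarith

end CompleteSums

section ForwardDifferences

variable {g : ℕ → ℝ} {A B : ℕ} {c : ℝ}

lemma mul_le_sub_of_le_fwdDiff (hg : ∀ n ∈ Ico A B, c ≤ Δ_[1] g n) (hAB : A ≤ B) :
    c * (B - A) ≤ g B - g A := by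
  calc c * (B - A) = #(Ico A B) • c := by
        rw [Nat.card_Ico, nsmul_eq_mul, Nat.cast_sub hAB, mul_comm]
    _ ≤ ∑ n ∈ Ico A B, Δ_[1] g n := card_nsmul_le_sum _ _ _ hg
    _ = g B - g A := sum_Ico_sub g hAB

lemma sub_le_mul_of_fwdDiff_le (hg : ∀ n ∈ Ico A B, Δ_[1] g n ≤ c) (hAB : A ≤ B) :
    g B - g A ≤ c * (B - A) := by
  calc g B - g A = ∑ n ∈ Ico A B, Δ_[1] g n := (sum_Ico_sub g hAB).symm
    _ ≤ #(Ico A B) • c := sum_le_card_nsmul _ _ _ hg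
    _ = c * (B - A) := by rw [Nat.card_Ico, nsmul_eq_mul, Nat.cast_sub hAB, mul_comm]

lemma mem_Icc_add_of_fwdDiff_mem_Icc (hg : ∀ n ∈ Ico A B, Δ_[1] g n ∈ Set.Icc 0 c)
    {m : ℕ} (hm : m ∈ Ico A B) : g m ∈ Set.Icc (g A) (g A + c * (B - A)) := by
  obtain ⟨hAm, hmB⟩ := mem_Ico.mp hm
  have hsub : Ico A m ⊆ Ico A B := Ico_subset_Ico_right hmB.le
  have hlower := mul_le_sub_of_le_fwdDiff (fun n hn ↦ (hg n (hsub hn)).1) hAm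
  have hupper := sub_le_mul_of_fwdDiff_le (fun n hn ↦ (hg n (hsub hn)).2) hAm
  have hc : 0 ≤ c := (hg m hm).1.trans (hg m hm).2
  have hlength : c * ((m : ℝ) - A) ≤ c * (B - A) := by gcongr
  exact ⟨by linarith, by linarith⟩

lemma abs_sub_tangent_le {f : ℕ → ℝ} {m j : ℕ}
    (hf : ∀ n ∈ Ico m (m + j), Δ_[1] (Δ_[1] f) n ∈ Set.Icc 0 c) :
    |f (m + j) - (f m + Δ_[1] f m * j)| ≤ c * j ^ 2 := by
  have hslope := fun n hn ↦ mem_Icc_add_of_fwdDiff_mem_Icc hf (m := n) hn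
  have hlower := mul_le_sub_of_le_fwdDiff (fun n hn ↦ (hslope n hn).1) (Nat.le_add_right m j)
  have hupper := sub_le_mul_of_fwdDiff_le (fun n hn ↦ (hslope n hn).2) (Nat.le_add_right m j)
  push_cast at hlower hupper
  rw [abs_of_nonneg] <;> linarith

end ForwardDifferences

section Combinatorics

lemma card_le_one_add_div_of_separated {ι : Type*} {S : Finset ι} {φ : ι → ℝ} {d D : ℝ}
    (hd : 0 < d) (hD : 0 ≤ D) (hsep : ∀ i ∈ S, ∀ j ∈ S, i ≠ j → d ≤ |φ i - φ j|)
    (hdiam : ∀ i ∈ S, ∀ j ∈ S, φ i - φ j ≤ D) : (#S : ℝ) ≤ 1 + D / d := by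
  obtain rfl | hS := S.eq_empty_or_nonempty
  · rw [card_empty, Nat.cast_zero]
    positivity
  obtain ⟨i₀, hi₀, hmin⟩ := exists_min_image S φ hS
  have hnonneg : ∀ i ∈ S, 0 ≤ (φ i - φ i₀) / d := fun i hi ↦
    div_nonneg (sub_nonneg.mpr (hmin i hi)) hd.le
  have hcard : #S ≤ #(range (⌊D / d⌋₊ + 1)) := by
    refine card_le_card_of_injOn (fun i ↦ ⌊(φ i - φ i₀) / d⌋₊) (fun i hi ↦ ?_) ?_
    · rw [mem_coe, mem_range, Nat.lt_add_one_iff]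
      exact Nat.floor_mono (div_le_div_of_nonneg_right (hdiam i hi i₀ hi₀) hd.le)
    · intro i hi j hj hij
      by_contra hne
      have hfloor : ⌊(φ i - φ i₀) / d⌋ = ⌊(φ j - φ i₀) / d⌋ := by
        rw [← Int.natCast_floor_eq_floor (hnonneg i hi),
          ← Int.natCast_floor_eq_floor (hnonneg j hj)]
        exact congrArg _ hij
      have hclose := Int.abs_sub_lt_one_of_floor_eq_floor hfloor
      rw [← sub_div, sub_sub_sub_cancel_right, abs_div, abs_of_pos hd, div_lt_one hd] at hclose
      exact hclose.not_ge (hsep i hi j hj hne)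
  rw [card_range] at hcard
  calc (#S : ℝ) ≤ 1 + ⌊D / d⌋₊ := by rw [add_comm]; exact_mod_cast hcard
    _ ≤ 1 + D / d := by gcongr; exact Nat.floor_le (by positivity)

lemma exists_greedy_tiling {q : ℕ → ℕ} (hq : ∀ m, 0 < q m) {A B : ℕ} (hAB : A ≤ B) :
    ∃ (S : Finset ℕ) (E : ℕ), A ≤ E ∧ E ≤ B ∧ B < E + q E ∧
      (S : Set ℕ).PairwiseDisjoint (fun m ↦ Ico m (m + q m)) ∧
      S.biUnion (fun m ↦ Ico m (m + q m)) = Ico A E := by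
  induction B, hAB using Nat.le_induction with
  | base => exact ⟨∅, A, le_rfl, le_rfl, Nat.lt_add_of_pos_right (hq A), by simp, by simp⟩
  | succ B _ ih =>
    obtain ⟨S, E, hAE, hEB, hBE, hdisj, hunion⟩ := ih
    obtain hlt | heq := (Nat.succ_le_iff.mpr hBE).lt_or_eq
    · exact ⟨S, E, hAE, by lia, hlt, hdisj, hunion⟩
    · refine ⟨insert E S, B + 1, by lia, le_rfl, Nat.lt_add_of_pos_right (hq _), ?_, ?_⟩
      · rw [coe_insert]
        refine hdisj.insert fun m hm _ ↦ ?_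
        have hsub : Ico m (m + q m) ⊆ Ico A E :=
          hunion ▸ subset_biUnion_of_mem (fun m ↦ Ico m (m + q m)) hm
        exact ((Ico_disjoint_Ico_consecutive A E _).mono_left hsub).symm
      · rw [biUnion_insert, hunion, ← heq, union_comm, Ico_union_Ico_eq_Ico hAE (by lia)]

lemma add_le_of_disjoint_Ico {m n a b : ℕ} (h : Disjoint (Ico m (m + a)) (Ico n (n + b)))
    (hb : 0 < b) (hmn : m < n) : m + a ≤ n := by
  by_contra! hlt
  exact disjoint_left.mp h (mem_Ico.mpr ⟨hmn.le, hlt⟩) (mem_Ico.mpr ⟨le_rfl, by lia⟩)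

lemma exists_blocks_abs_sum_le {q : ℕ → ℕ} {Q A B : ℕ} (hq : ∀ m, 0 < q m) (hqQ : ∀ m, q m ≤ Q)
    (hAB : A ≤ B) {h : ℕ → ℝ} {b c : ℝ} (hb : ∀ u, |h u| ≤ b)
    (hc : ∀ m, Ico m (m + q m) ⊆ Ico A B → |∑ u ∈ Ico m (m + q m), h u| ≤ c) :
    ∃ S ⊆ Ico A B, (S : Set ℕ).PairwiseDisjoint (fun m ↦ Ico m (m + q m)) ∧
      |∑ u ∈ Ico A B, h u| ≤ #S * c + Q * b := by
  obtain ⟨S, E, hAE, hEB, hBE, hdisj, hunion⟩ := exists_greedy_tiling hq hAB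
  have hsub : ∀ m ∈ S, Ico m (m + q m) ⊆ Ico A B := fun m hm ↦
    ((subset_biUnion_of_mem (fun m ↦ Ico m (m + q m)) hm).trans hunion.subset).trans
      (Ico_subset_Ico_right hEB)
  have hblocks : |∑ u ∈ Ico A E, h u| ≤ #S * c := by
    rw [← hunion, sum_biUnion hdisj, ← nsmul_eq_mul]
    exact (abs_sum_le_sum_abs _ _).trans
      (sum_le_card_nsmul _ _ _ fun m hm ↦ hc m (hsub m hm))
  have htail : |∑ u ∈ Ico E B, h u| ≤ Q * b := by
    have hb₀ : 0 ≤ b := (abs_nonneg _).trans (hb 0)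
    have hlength : B - E ≤ Q := by have := hqQ E; lia
    calc |∑ u ∈ Ico E B, h u| ≤ #(Ico E B) • b :=
          (abs_sum_le_sum_abs _ _).trans (sum_le_card_nsmul _ _ _ fun u _ ↦ hb u)
      _ ≤ Q * b := by rw [Nat.card_Ico, nsmul_eq_mul]; gcongr
  refine ⟨S, fun m hm ↦ hsub m hm (left_mem_Ico.mpr (Nat.lt_add_of_pos_right (hq m))), hdisj, ?_⟩
  rw [← sum_Ico_consecutive _ hAE hEB]
  exact (abs_add_le _ _).trans (add_le_add hblocks htail)

end Combinatorics

/-- `r` is a rational approximation to `ξ` of the quality that Dirichlet's theorem provides for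
denominators up to `Q`. -/
structure IsDirichletApprox (ξ : ℝ) (Q : ℕ) (r : ℚ) : Prop where
  abs_sub_le : |ξ - r| ≤ 1 / ((Q + 1) * r.den)
  den_le : r.den ≤ Q

namespace IsDirichletApprox

lemma exists_of_pos (ξ : ℝ) {Q : ℕ} (hQ : 0 < Q) : ∃ r, IsDirichletApprox ξ Q r :=
  (Real.exists_rat_abs_sub_le_and_den_le ξ hQ).imp fun _ h ↦ ⟨h.1, h.2⟩

variable {ξ : ℝ} {Q : ℕ} {r : ℚ}

lemma abs_den_mul_sub_num_le (h : IsDirichletApprox ξ Q r) :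
    |r.den * ξ - r.num| ≤ 1 / (Q + 1) := by
  have hden : (0 : ℝ) < r.den := Nat.cast_pos.mpr r.den_pos
  have hfactor : r.den * ξ - r.num = r.den * (ξ - r) := by
    rw [Rat.cast_def]
    field_simp
  calc |r.den * ξ - r.num| = r.den * |ξ - r| := by rw [hfactor, abs_mul, abs_of_pos hden]
    _ ≤ r.den * (1 / ((Q + 1) * r.den)) := by gcongr; exact h.abs_sub_le
    _ = 1 / (Q + 1) := by field_simp

end IsDirichletApprox

section SecondDifferenceTest

variable {f g : ℕ → ℝ} {T K : ℝ} {A B : ℕ}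

lemma abs_sum_sawtooth_block_le {m : ℕ} {r : ℚ} (hr : IsDirichletApprox (Δ_[1] f m) ⌊T⌋₊ r)
    (hT : 0 ≤ T) (hK : 0 ≤ K)
    (hf : ∀ n ∈ Ico m (m + r.den), Δ_[1] (Δ_[1] f) n ∈ Set.Icc 0 (K / T ^ 3)) :
    |∑ u ∈ Ico m (m + r.den), sawtooth (f u)| ≤ 5 / 2 + 2 * K := by
  have : NeZero r.den := ⟨r.den_nz⟩
  have : (0 : ℝ) < r.den := Nat.cast_pos.mpr r.den_pos
  have hdenT : (r.den : ℝ) ≤ T := (Nat.cast_le.mpr hr.den_le).trans (Nat.floor_le hT)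
  have hnear : ∀ j ∈ range r.den, |f (m + j) - (f m + r.num * j / r.den)| ≤ (K + 1) / r.den := by
    intro j hj
    have hj : j ≤ r.den := (mem_range.mp hj).le
    have hj' : (j : ℝ) ≤ r.den := Nat.cast_le.mpr hj
    have htangent : |f (m + j) - (f m + Δ_[1] f m * j)| ≤ K / r.den :=
      calc |f (m + j) - (f m + Δ_[1] f m * j)| ≤ K / T ^ 3 * j ^ 2 :=
            abs_sub_tangent_le fun n hn ↦ hf n (Ico_subset_Ico_right (by lia) hn)
        _ ≤ K / r.den ^ 3 * r.den ^ 2 := by gcongr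
        _ = K / r.den := by field_simp
    have hslope : |j * (Δ_[1] f m - r)| ≤ 1 / r.den :=
      calc |j * (Δ_[1] f m - r)| = j * |Δ_[1] f m - r| := by rw [abs_mul, Nat.abs_cast]
        _ ≤ r.den * (1 / ((⌊T⌋₊ + 1) * r.den)) := by gcongr; exact hr.abs_sub_le
        _ = 1 / (⌊T⌋₊ + 1) := by field_simp
        _ ≤ 1 / r.den := by gcongr; linarith [Nat.lt_floor_add_one T]
    calc |f (m + j) - (f m + r.num * j / r.den)|
        = |(f (m + j) - (f m + Δ_[1] f m * j)) + j * (Δ_[1] f m - r)| := by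
          rw [Rat.cast_def]
          ring_nf
      _ ≤ K / r.den + 1 / r.den := (abs_add_le _ _).trans (add_le_add htangent hslope)
      _ = (K + 1) / r.den := by ring
  rw [sum_Ico_eq_sum_range, Nat.add_sub_cancel_left]
  refine (abs_sum_sawtooth_le_of_near_progression r.isCoprime_num_den hnear).trans_eq ?_
  field_simp
  ring

variable {S : Finset ℕ} {r : ℕ → ℚ}

lemma sub_le_of_isDirichletApprox {m n : ℕ} {s : ℚ} (hT : 0 < T)
    (hm : IsDirichletApprox (g m) ⌊T⌋₊ s) (hn : IsDirichletApprox (g n) ⌊T⌋₊ s) (hmn : m ≤ n)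
    (hg : ∀ k ∈ Ico m n, 1 / T ^ 3 ≤ Δ_[1] g k) : (n : ℝ) - m ≤ 2 * T ^ 2 / s.den := by
  have : (0 : ℝ) < s.den := Nat.cast_pos.mpr s.den_pos
  have hgrowth := mul_le_sub_of_le_fwdDiff hg hmn
  have hm_near := abs_le.mp hm.abs_sub_le
  have hn_near := abs_le.mp hn.abs_sub_le
  have hclose : 1 / ((⌊T⌋₊ + 1) * s.den : ℝ) ≤ 1 / (T * s.den) := by
    gcongr
    exact (Nat.lt_floor_add_one T).le
  have hspread : 1 / T ^ 3 * (n - m) ≤ 2 / (T * s.den) := by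
    rw [← mul_one_div 2]
    linarith
  calc (n : ℝ) - m = T ^ 3 * (1 / T ^ 3 * (n - m)) := by field_simp
    _ ≤ T ^ 3 * (2 / (T * s.den)) := mul_le_mul_of_nonneg_left hspread (by positivity)
    _ = 2 * T ^ 2 / s.den := by field_simp

lemma card_blocks_filter_eq_le (hT : 0 < T) (hr : ∀ m ∈ S, IsDirichletApprox (g m) ⌊T⌋₊ (r m))
    (hg : ∀ n ∈ Ico A B, 1 / T ^ 3 ≤ Δ_[1] g n) (hS : S ⊆ Ico A B)
    (hdisj : (S : Set ℕ).PairwiseDisjoint fun m ↦ Ico m (m + (r m).den)) {s : ℚ}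
    (hs : s.den ≤ ⌊T⌋₊) : (#{m ∈ S | r m = s} : ℝ) ≤ 3 * T ^ 2 / s.den ^ 2 := by
  have hden : (0 : ℝ) < s.den := Nat.cast_pos.mpr s.den_pos
  have hdenT : (s.den : ℝ) ≤ T := (Nat.cast_le.mpr hs).trans (Nat.floor_le hT.le)
  have hsep : ∀ m ∈ ({m ∈ S | r m = s} : Finset ℕ), ∀ n ∈ ({m ∈ S | r m = s} : Finset ℕ),
      m ≠ n → (s.den : ℝ) ≤ |(m : ℝ) - n| := by
    intro m hm n hn hne
    wlog hlt : m < n generalizing m n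
    · rw [abs_sub_comm]
      exact this n hn m hm hne.symm (by lia)
    obtain ⟨⟨hmS, rfl⟩, hnS, -⟩ := mem_filter.mp hm, mem_filter.mp hn
    have hstep : m + (r m).den ≤ n :=
      add_le_of_disjoint_Ico (hdisj hmS hnS hne) (r n).den_pos hlt
    rw [abs_sub_comm]
    exact (le_sub_iff_add_le'.mpr (by exact_mod_cast hstep)).trans (le_abs_self _)
  have hdiam : ∀ n ∈ ({m ∈ S | r m = s} : Finset ℕ), ∀ m ∈ ({m ∈ S | r m = s} : Finset ℕ),
      (n : ℝ) - m ≤ 2 * T ^ 2 / s.den := by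
    intro n hn m hm
    obtain hle | hlt := le_total n m
    · exact (sub_nonpos.mpr (Nat.cast_le.mpr hle)).trans (by positivity)
    obtain ⟨⟨hmS, hms⟩, hnS, hns⟩ := mem_filter.mp hm, mem_filter.mp hn
    have hsub : Ico m n ⊆ Ico A B :=
      Ico_subset_Ico (mem_Ico.mp (hS hmS)).1 (mem_Ico.mp (hS hnS)).2.le
    exact sub_le_of_isDirichletApprox hT (hms ▸ hr m hmS) (hns ▸ hr n hnS) hlt
      fun k hk ↦ hg k (hsub hk)
  calc (#{m ∈ S | r m = s} : ℝ) ≤ 1 + 2 * T ^ 2 / s.den / s.den :=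
        card_le_one_add_div_of_separated hden (by positivity) hsep hdiam
    _ ≤ T ^ 2 / s.den ^ 2 + 2 * T ^ 2 / s.den / s.den := by
        gcongr
        rw [one_le_div₀ (by positivity)]
        gcongr
    _ = 3 * T ^ 2 / s.den ^ 2 := by
        field_simp
        norm_num

lemma card_slopes_filter_den_eq_le (hT : 1 ≤ T) (hK : 0 ≤ K)
    (hr : ∀ m ∈ S, IsDirichletApprox (g m) ⌊T⌋₊ (r m))
    (hg : ∀ n ∈ Ico A B, Δ_[1] g n ∈ Set.Icc 0 (K / T ^ 3)) (hS : S ⊆ Ico A B) (hAB : A ≤ B)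
    (q : ℕ) :
    (#{s ∈ S.image r | s.den = q} : ℝ) ≤ 2 + q * (K * (B - A) / T ^ 3) := by
  have hlen : (0 : ℝ) ≤ B - A := sub_nonneg.mpr (Nat.cast_le.mpr hAB)
  have hhalf : 1 / ((⌊T⌋₊ : ℝ) + 1) ≤ 1 / 2 := by
    have : (1 : ℝ) ≤ ⌊T⌋₊ := Nat.one_le_cast.mpr (Nat.floor_pos.mpr hT)
    gcongr
    linarith
  have hsep : ∀ s ∈ ({s ∈ S.image r | s.den = q} : Finset ℚ),
      ∀ t ∈ ({s ∈ S.image r | s.den = q} : Finset ℚ), s ≠ t → (1 : ℝ) ≤ |(s.num : ℝ) - t.num| := by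
    intro s hs t ht hne
    have hden : s.den = t.den := (mem_filter.mp hs).2.trans (mem_filter.mp ht).2.symm
    have hnum : s.num - t.num ≠ 0 := fun h ↦ hne (Rat.ext (sub_eq_zero.mp h) hden)
    exact_mod_cast Int.one_le_abs hnum
  have hrange := fun m hm ↦ mem_Icc_add_of_fwdDiff_mem_Icc hg (m := m) (hS hm)
  have hdiam : ∀ s ∈ ({s ∈ S.image r | s.den = q} : Finset ℚ),
      ∀ t ∈ ({s ∈ S.image r | s.den = q} : Finset ℚ),
      (s.num : ℝ) - t.num ≤ 1 + q * (K * (B - A) / T ^ 3) := by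
    intro s hs t ht
    simp only [mem_filter, mem_image] at hs ht
    obtain ⟨⟨m, hm, rfl⟩, hmq⟩ := hs
    obtain ⟨⟨n, hn, rfl⟩, hnq⟩ := ht
    have hm_near := abs_le.mp (hmq ▸ (hr m hm).abs_den_mul_sub_num_le)
    have hn_near := abs_le.mp (hnq ▸ (hr n hn).abs_den_mul_sub_num_le)
    have hslopes : q * g m - q * g n ≤ q * (K * (B - A) / T ^ 3) := by
      rw [← mul_sub, ← div_mul_eq_mul_div]
      gcongr
      linarith [(hrange m hm).2, (hrange n hn).1]
    linarith
  refine (card_le_one_add_div_of_separated one_pos (by positivity) hsep hdiam).trans_eq ?_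
  ring

lemma card_blocks_den_eq_le (hT : 1 ≤ T) (hK : 0 ≤ K)
    (hr : ∀ m ∈ S, IsDirichletApprox (g m) ⌊T⌋₊ (r m))
    (hg : ∀ n ∈ Ico A B, Δ_[1] g n ∈ Set.Icc (1 / T ^ 3) (K / T ^ 3)) (hS : S ⊆ Ico A B)
    (hAB : A ≤ B) (hdisj : (S : Set ℕ).PairwiseDisjoint fun m ↦ Ico m (m + (r m).den))
    {q : ℕ} (hq : q ∈ Icc 1 ⌊T⌋₊) :
    (#{m ∈ S | (r m).den = q} : ℝ) ≤ 3 * (K * (B - A) / T + 2 * T ^ 2) * (q : ℝ)⁻¹ := by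
  obtain ⟨hq_pos, hq_le⟩ := mem_Icc.mp hq
  have hq₁ : (1 : ℝ) ≤ q := Nat.one_le_cast.mpr hq_pos
  have hT₀ : 0 < T := by linarith
  have : (0 : ℝ) ≤ B - A := sub_nonneg.mpr (Nat.cast_le.mpr hAB)
  have hfiber : ∀ s ∈ ({s ∈ S.image r | s.den = q} : Finset ℚ),
      (#{m ∈ ({m ∈ S | (r m).den = q} : Finset ℕ) | r m = s} : ℝ) ≤ 3 * T ^ 2 / q ^ 2 := by
    intro s hs
    obtain rfl := (mem_filter.mp hs).2
    refine le_trans ?_ (card_blocks_filter_eq_le hT₀ hr (fun n hn ↦ (hg n hn).1) hS hdisj hq_le)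
    gcongr
    exact filter_subset _ _
  have hmaps : ∀ m ∈ ({m ∈ S | (r m).den = q} : Finset ℕ),
      r m ∈ ({s ∈ S.image r | s.den = q} : Finset ℚ) := fun m hm ↦
    mem_filter.mpr ⟨mem_image_of_mem r (mem_filter.mp hm).1, (mem_filter.mp hm).2⟩
  have hg₀ : ∀ n ∈ Ico A B, Δ_[1] g n ∈ Set.Icc 0 (K / T ^ 3) := fun n hn ↦
    Set.Icc_subset_Icc_left (by positivity) (hg n hn)
  rw [card_eq_sum_card_fiberwise hmaps, Nat.cast_sum]
  calc ∑ s ∈ S.image r with s.den = q,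
          (#{m ∈ ({m ∈ S | (r m).den = q} : Finset ℕ) | r m = s} : ℝ)
      ≤ #{s ∈ S.image r | s.den = q} * (3 * T ^ 2 / q ^ 2) := by
        rw [← nsmul_eq_mul]
        exact sum_le_card_nsmul _ _ _ hfiber
    _ ≤ (2 * q + q * (K * (B - A) / T ^ 3)) * (3 * T ^ 2 / q ^ 2) := by
        gcongr
        refine (card_slopes_filter_den_eq_le hT hK hr hg₀ hS hAB q).trans ?_
        gcongr
        linarith
    _ = 3 * (K * (B - A) / T + 2 * T ^ 2) * (q : ℝ)⁻¹ := by
        field_simp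
        ring

lemma card_blocks_le (hT : 1 ≤ T) (hK : 0 ≤ K)
    (hr : ∀ m ∈ S, IsDirichletApprox (g m) ⌊T⌋₊ (r m))
    (hg : ∀ n ∈ Ico A B, Δ_[1] g n ∈ Set.Icc (1 / T ^ 3) (K / T ^ 3)) (hS : S ⊆ Ico A B)
    (hAB : A ≤ B) (hdisj : (S : Set ℕ).PairwiseDisjoint fun m ↦ Ico m (m + (r m).den)) :
    (#S : ℝ) ≤ 3 * (K * (B - A) / T + 2 * T ^ 2) * (1 + Real.log T) := by
  have hlen : (0 : ℝ) ≤ B - A := sub_nonneg.mpr (Nat.cast_le.mpr hAB)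
  have hmaps : ∀ m ∈ S, (r m).den ∈ Icc 1 ⌊T⌋₊ := fun m hm ↦
    mem_Icc.mpr ⟨(r m).den_pos, (hr m hm).den_le⟩
  rw [card_eq_sum_card_fiberwise hmaps, Nat.cast_sum]
  calc ∑ q ∈ Icc 1 ⌊T⌋₊, (#{m ∈ S | (r m).den = q} : ℝ)
      ≤ ∑ q ∈ Icc 1 ⌊T⌋₊, 3 * (K * (B - A) / T + 2 * T ^ 2) * (q : ℝ)⁻¹ :=
        sum_le_sum fun q hq ↦ card_blocks_den_eq_le hT hK hr hg hS hAB hdisj hq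
    _ = 3 * (K * (B - A) / T + 2 * T ^ 2) * (harmonic ⌊T⌋₊ : ℚ) := by
        rw [← mul_sum, harmonic_eq_sum_Icc]
        push_cast
        rfl
    _ ≤ 3 * (K * (B - A) / T + 2 * T ^ 2) * (1 + Real.log T) := by
        gcongr
        exact harmonic_floor_le_one_add_log T hT

lemma abs_sum_sawtooth_le_of_fwdDiff_fwdDiff_of_one_le (hT : 1 ≤ T) (hK : 0 ≤ K) (hAB : A ≤ B)
    (hf : ∀ n ∈ Ico A B, Δ_[1] (Δ_[1] f) n ∈ Set.Icc (1 / T ^ 3) (K / T ^ 3)) :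
    |∑ u ∈ Ico A B, sawtooth (f u)| ≤
      (8 + 6 * K) * (K * (B - A) / T + 2 * T ^ 2) * (1 + Real.log T) := by
  have hT₀ : 0 ≤ T := by linarith
  have hlen : (0 : ℝ) ≤ B - A := sub_nonneg.mpr (Nat.cast_le.mpr hAB)
  have hlog := Real.log_nonneg hT
  choose r hr using fun m ↦ IsDirichletApprox.exists_of_pos (Δ_[1] f m) (Nat.floor_pos.mpr hT)
  have hblock : ∀ m, Ico m (m + (r m).den) ⊆ Ico A B →
      |∑ u ∈ Ico m (m + (r m).den), sawtooth (f u)| ≤ 5 / 2 + 2 * K :=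
    fun m hsub ↦ abs_sum_sawtooth_block_le (hr m) hT₀ hK fun n hn ↦
      Set.Icc_subset_Icc_left (by positivity) (hf n (hsub hn))
  obtain ⟨S, hS, hdisj, hsum⟩ := exists_blocks_abs_sum_le (fun m ↦ (r m).den_pos)
    (fun m ↦ (hr m).den_le) hAB (fun u ↦ abs_sawtooth_le (f u)) hblock
  have hcard := card_blocks_le hT hK (fun m _ ↦ hr m) hf hS hAB hdisj
  have htail : ⌊T⌋₊ * (1 / 2) ≤
      1 / 2 * ((K * (B - A) / T + 2 * T ^ 2) * (1 + Real.log T)) := by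
    have hfloor := Nat.floor_le hT₀
    calc ⌊T⌋₊ * (1 / 2) ≤ 1 / 2 * ((0 + 1 * T ^ 2) * (1 + 0)) := by nlinarith
      _ ≤ 1 / 2 * ((K * (B - A) / T + 2 * T ^ 2) * (1 + Real.log T)) := by
          gcongr
          · positivity
          · norm_num
  calc |∑ u ∈ Ico A B, sawtooth (f u)| ≤ #S * (5 / 2 + 2 * K) + ⌊T⌋₊ * (1 / 2) := hsum
    _ ≤ 3 * (K * (B - A) / T + 2 * T ^ 2) * (1 + Real.log T) * (5 / 2 + 2 * K) +
          1 / 2 * ((K * (B - A) / T + 2 * T ^ 2) * (1 + Real.log T)) := by gcongr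
    _ = (8 + 6 * K) * (K * (B - A) / T + 2 * T ^ 2) * (1 + Real.log T) := by ring

theorem abs_sum_sawtooth_le_of_fwdDiff_fwdDiff (hT : 0 < T) (hK : 1 ≤ K) (hAB : A ≤ B)
    (hf : ∀ n ∈ Ico A B, Δ_[1] (Δ_[1] f) n ∈ Set.Icc (1 / T ^ 3) (K / T ^ 3)) :
    |∑ u ∈ Ico A B, sawtooth (f u)| ≤
      (8 + 6 * K) * (K * (B - A) / T + 2 * T ^ 2) * (1 + Real.posLog T) := by
  obtain hT₁ | hT₁ := le_total 1 T
  · rw [Real.posLog_eq_log (hT₁.trans (le_abs_self T))]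
    exact abs_sum_sawtooth_le_of_fwdDiff_fwdDiff_of_one_le hT₁ (by linarith) hAB hf
  have hlen : (0 : ℝ) ≤ B - A := sub_nonneg.mpr (Nat.cast_le.mpr hAB)
  have hlog := Real.posLog_nonneg (x := T)
  calc |∑ u ∈ Ico A B, sawtooth (f u)| ≤ #(Ico A B) • (1 / 2 : ℝ) :=
        (abs_sum_le_sum_abs _ _).trans (sum_le_card_nsmul _ _ _ fun u _ ↦ abs_sawtooth_le (f u))
    _ = 1 / 2 * (1 * (B - A) / 1 + 0) * (1 + 0) := by
        rw [Nat.card_Ico, nsmul_eq_mul, Nat.cast_sub hAB]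
        ring
    _ ≤ (8 + 6 * K) * (K * (B - A) / T + 2 * T ^ 2) * (1 + Real.posLog T) := by
        gcongr
        · linarith
        · positivity

end SecondDifferenceTest

section WeightedSums

variable {h : ℕ → ℝ} {M : ℝ}

lemma sum_Ico_mul_eq_add_sum_fwdDiff_mul (w h : ℕ → ℝ) (A B : ℕ) :
    ∑ u ∈ Ico A B, w u * h u =
      w A * ∑ u ∈ Ico A B, h u + ∑ k ∈ Ico A B, Δ_[1] w k * ∑ u ∈ Ico (k + 1) B, h u := by
  have hswap : ∑ k ∈ Ico A B, Δ_[1] w k * ∑ u ∈ Ico (k + 1) B, h u =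
      ∑ u ∈ Ico A B, (w u - w A) * h u := by
    simp only [mul_sum]
    rw [sum_Ico_Ico_comm']
    refine sum_congr rfl fun u hu ↦ ?_
    rw [← sum_mul, ← sum_Ico_sub w (mem_Ico.mp hu).1]
    rfl
  rw [hswap, mul_sum, ← sum_add_distrib]
  exact sum_congr rfl fun u _ ↦ by ring

lemma abs_sum_mul_le_of_monotone {w : ℕ → ℝ} {A B : ℕ} (hw : Monotone w) (hwA : 0 ≤ w A)
    (hAB : A ≤ B) (hM : ∀ k ∈ Icc A B, |∑ u ∈ Ico k B, h u| ≤ M) :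
    |∑ u ∈ Ico A B, w u * h u| ≤ w B * M := by
  have hΔ (k : ℕ) : 0 ≤ Δ_[1] w k := sub_nonneg.mpr (hw k.le_succ)
  have htails : ∀ k ∈ Ico A B, |Δ_[1] w k * ∑ u ∈ Ico (k + 1) B, h u| ≤ Δ_[1] w k * M := by
    intro k hk
    rw [abs_mul, abs_of_nonneg (hΔ k)]
    have hk' := mem_Ico.mp hk
    exact mul_le_mul_of_nonneg_left (hM (k + 1) (mem_Icc.mpr (by lia))) (hΔ k)
  rw [sum_Ico_mul_eq_add_sum_fwdDiff_mul]
  calc |w A * ∑ u ∈ Ico A B, h u + ∑ k ∈ Ico A B, Δ_[1] w k * ∑ u ∈ Ico (k + 1) B, h u|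
      ≤ w A * M + ∑ k ∈ Ico A B, Δ_[1] w k * M := by
        refine (abs_add_le _ _).trans (add_le_add ?_ ?_)
        · rw [abs_mul, abs_of_nonneg hwA]
          exact mul_le_mul_of_nonneg_left (hM A (left_mem_Icc.mpr hAB)) hwA
        · exact (abs_sum_le_sum_abs _ _).trans (sum_le_sum htails)
    _ = w A * M + (w B - w A) * M := by
        rw [← sum_mul, ← sum_Ico_sub w hAB]
        rfl
    _ = w B * M := by ring

lemma abs_sum_le_of_dyadic {α : ℝ} (hα : 0 < α) {N : ℕ}
    (hM : ∀ n ≤ N, 0 < n → |∑ u ∈ Ico (n / 2 + 1) (n + 1), h u| ≤ M * (n : ℝ) ^ α) :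
    |∑ u ∈ Ico 1 (N + 1), h u| ≤ M / (1 - 2 ^ (-α)) * (N : ℝ) ^ α := by
  have hratio : (2 : ℝ) ^ (-α) < 1 :=
    Real.rpow_lt_one_of_one_lt_of_neg one_lt_two (neg_neg_of_pos hα)
  induction N using Nat.strong_induction_on with
  | h N ih =>
    obtain rfl | hN := N.eq_zero_or_pos
    · simp [hα.ne']
    have hM₀ : 0 ≤ M := by simpa using (abs_nonneg _).trans (hM 1 hN one_pos)
    have hhalf : ((N / 2 : ℕ) : ℝ) ^ α ≤ 2 ^ (-α) * (N : ℝ) ^ α := by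
      calc ((N / 2 : ℕ) : ℝ) ^ α ≤ (2⁻¹ * N) ^ α := by
            gcongr
            exact Nat.cast_div_le.trans_eq (div_eq_inv_mul _ _)
        _ = 2 ^ (-α) * (N : ℝ) ^ α := by
            rw [Real.mul_rpow (by norm_num) (by positivity), Real.inv_rpow zero_le_two,
              Real.rpow_neg zero_le_two]
    have hlower := ih (N / 2) (by lia) fun n hn ↦ hM n (by lia)
    rw [← sum_Ico_consecutive h (by lia : 1 ≤ N / 2 + 1) (by lia)]
    have hpos : 0 < 1 - (2 : ℝ) ^ (-α) := sub_pos.mpr hratio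
    calc |∑ u ∈ Ico 1 (N / 2 + 1), h u + ∑ u ∈ Ico (N / 2 + 1) (N + 1), h u|
        ≤ M / (1 - 2 ^ (-α)) * ((N / 2 : ℕ) : ℝ) ^ α + M * (N : ℝ) ^ α :=
          (abs_add_le _ _).trans (add_le_add hlower (hM N le_rfl hN))
      _ ≤ M / (1 - 2 ^ (-α)) * (2 ^ (-α) * (N : ℝ) ^ α) + M * (N : ℝ) ^ α := by gcongr
      _ = M / (1 - 2 ^ (-α)) * (N : ℝ) ^ α := by
          field_simp
          ring

end WeightedSums

section InverseSquare

variable {x : ℝ} {N : ℕ}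

lemma fwdDiff_fwdDiff_div_sq (x : ℝ) {n : ℕ} (hn : n ≠ 0) :
    Δ_[1] (Δ_[1] fun u : ℕ ↦ x / (u : ℝ) ^ 2) n =
      x * (6 * (n + 1) ^ 2 - 2) / (n * (n + 1) * (n + 2)) ^ 2 := by
  have hn' : (n : ℝ) ≠ 0 := Nat.cast_ne_zero.mpr hn
  have h₁ : (n : ℝ) + 1 ≠ 0 := by positivity
  have h₂ : (n : ℝ) + 2 ≠ 0 := by positivity
  simp only [fwdDiff]
  push_cast
  rw [add_assoc (n : ℝ) 1 1, one_add_one_eq_two]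
  field_simp
  ring

lemma fwdDiff_fwdDiff_div_sq_mem_Icc (hx : 0 ≤ x) {n : ℕ} (hn : n ≠ 0) :
    Δ_[1] (Δ_[1] fun u : ℕ ↦ x / (u : ℝ) ^ 2) n ∈
      Set.Icc (4 * x / (n + 1) ^ 4) (6 * x / n ^ 4) := by
  have hn₀ : (0 : ℝ) < n := Nat.cast_pos.mpr (Nat.pos_of_ne_zero hn)
  have hnumerator : 0 ≤ x * (6 * ((n : ℝ) + 1) ^ 2 - 2) := mul_nonneg hx (by nlinarith)
  rw [fwdDiff_fwdDiff_div_sq x hn]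
  constructor
  · calc 4 * x / (n + 1) ^ 4 = x * (4 * (n + 1) ^ 2) / ((n + 1) ^ 2 * (n + 1)) ^ 2 := by
          field_simp
      _ ≤ x * (6 * (n + 1) ^ 2 - 2) / (n * (n + 1) * (n + 2)) ^ 2 := by
          gcongr ?_ * ?_ / ?_ ^ 2 <;> nlinarith
  · calc x * (6 * (n + 1) ^ 2 - 2) / (n * (n + 1) * (n + 2)) ^ 2
        ≤ x * (6 * (n + 1) ^ 2) / (n * (n + 1) * n) ^ 2 := by
          gcongr ?_ * ?_ / (_ * ?_) ^ 2 <;> linarith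
      _ = 6 * x / n ^ 4 := by field_simp

lemma fwdDiff_fwdDiff_div_sq_mem_Icc_of_dyadic (hx : 0 ≤ x) {n : ℕ}
    (hn : n ∈ Ico (N / 2 + 1) (N + 1)) :
    Δ_[1] (Δ_[1] fun u : ℕ ↦ x / (u : ℝ) ^ 2) n ∈
      Set.Icc (x / (8 * N ^ 4)) (768 * (x / (8 * N ^ 4))) := by
  have hn' := mem_Ico.mp hn
  have hn₀ : (0 : ℝ) < n := Nat.cast_pos.mpr (by lia)
  have hN₀ : (0 : ℝ) < N := Nat.cast_pos.mpr (by lia)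
  have hhalf : (N : ℝ) ≤ 2 * n := by exact_mod_cast (by lia : N ≤ 2 * n)
  have hdouble : (n : ℝ) + 1 ≤ 2 * N := by exact_mod_cast (by lia : n + 1 ≤ 2 * N)
  obtain ⟨hlower, hupper⟩ := fwdDiff_fwdDiff_div_sq_mem_Icc hx (by lia : n ≠ 0)
  constructor
  · calc x / (8 * N ^ 4) ≤ 4 * x / (2 * N) ^ 4 := by
          rw [mul_pow, mul_div_assoc, div_le_iff₀ (by positivity)]
          field_simp
          nlinarith
      _ ≤ 4 * x / (n + 1) ^ 4 := by gcongr
      _ ≤ _ := hlower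
  · calc _ ≤ 6 * x / n ^ 4 := hupper
      _ ≤ 6 * x / (N / 2) ^ 4 := by
          gcongr
          linarith
      _ = 768 * (x / (8 * N ^ 4)) := by
          field_simp
          ring

lemma pow_three_le_of_pow_three_mul_eq {T : ℝ} (hT : 0 ≤ T) (hN : 0 < N)
    (hxN : (N : ℝ) ^ 3 ≤ x) (hTx : T ^ 3 * x = 8 * N ^ 4) : T ^ 3 ≤ 8 * N := by
  refine le_of_mul_le_mul_right ?_ (by positivity : (0 : ℝ) < (N : ℝ) ^ 3)
  calc T ^ 3 * (N : ℝ) ^ 3 ≤ T ^ 3 * x := by gcongr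
    _ = 8 * N * (N : ℝ) ^ 3 := by rw [hTx]; ring

lemma abs_sum_sawtooth_div_sq_le {T : ℝ} (hT : 0 < T) (hN : 0 < N) (hxN : (N : ℝ) ^ 3 ≤ x)
    (hTx : T ^ 3 * x = 8 * N ^ 4) {k : ℕ} (hk : k ∈ Icc (N / 2 + 1) (N + 1)) :
    |∑ u ∈ Ico k (N + 1), sawtooth (x / (u : ℝ) ^ 2)| ≤
      2 ^ 22 * (N / T) * (1 + Real.posLog T) := by
  have : (0 : ℝ) < N := Nat.cast_pos.mpr hN
  have hx₀ : 0 < x := (by positivity : (0 : ℝ) < N ^ 3).trans_le hxN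
  obtain ⟨hk₁, hk₂⟩ := mem_Icc.mp hk
  have hscale : 1 / T ^ 3 = x / (8 * N ^ 4) := by
    rw [← hTx]
    field_simp
  have hcurvature : ∀ n ∈ Ico k (N + 1), Δ_[1] (Δ_[1] fun u : ℕ ↦ x / (u : ℝ) ^ 2) n ∈
      Set.Icc (1 / T ^ 3) (768 / T ^ 3) := by
    intro n hn
    rw [div_eq_mul_one_div 768, hscale]
    exact fwdDiff_fwdDiff_div_sq_mem_Icc_of_dyadic hx₀.le (Ico_subset_Ico_left hk₁ hn)
  have hT_cube := pow_three_le_of_pow_three_mul_eq hT.le hN hxN hTx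
  have hsq : T ^ 2 ≤ 8 * (N / T) := by
    rw [← mul_div_assoc, le_div_iff₀ hT]
    linarith
  have hlength : ((N + 1 : ℕ) : ℝ) - k ≤ N := by
    have : (1 : ℝ) ≤ k := Nat.one_le_cast.mpr (by lia)
    push_cast
    linarith
  have hlog := Real.posLog_nonneg (x := T)
  calc |∑ u ∈ Ico k (N + 1), sawtooth (x / (u : ℝ) ^ 2)|
      ≤ (8 + 6 * 768) * (768 * ((N + 1 : ℕ) - k) / T + 2 * T ^ 2) * (1 + Real.posLog T) :=
        abs_sum_sawtooth_le_of_fwdDiff_fwdDiff hT (by norm_num) hk₂ hcurvature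
    _ ≤ (8 + 6 * 768) * (768 * N / T + 2 * (8 * (N / T))) * (1 + Real.posLog T) := by gcongr
    _ = 3618944 * (N / T) * (1 + Real.posLog T) := by ring
    _ ≤ 2 ^ 22 * (N / T) * (1 + Real.posLog T) := by
        gcongr
        norm_num

lemma one_add_posLog_le {T : ℝ} (hx : 2 ≤ x) (hT : 0 ≤ T) (hTx : T ^ 3 ≤ 8 * x) :
    1 + Real.posLog T ≤ 4 * Real.log x := by
  have hT_le : T ≤ x ^ 2 := by
    refine le_of_pow_le_pow_left₀ three_ne_zero (by positivity) ?_
    calc T ^ 3 ≤ 2 ^ 5 * x := by linarith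
      _ ≤ x ^ 5 * x := by gcongr
      _ = (x ^ 2) ^ 3 := by ring
  have hposLog : Real.posLog T ≤ 2 * Real.log x := by
    calc Real.posLog T ≤ Real.posLog (x ^ 2) := Real.posLog_le_posLog hT hT_le
      _ = 2 * Real.log x := by
          rw [Real.posLog_eq_log (by rw [abs_sq]; nlinarith), Real.log_pow, Nat.cast_two]
  have hlog_two : 1 / 2 ≤ Real.log x :=
    (by linarith [Real.log_two_gt_d9] : 1 / 2 ≤ Real.log 2).trans (by gcongr)
  linarith

lemma exists_pow_three_mul_eq {a : ℝ} (ha : 0 < a) (hx : 0 < x) :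
    ∃ T > 0, T ^ 3 * x = 8 * a ^ 4 ∧ a ^ 2 / T = x ^ (1 / 3 : ℝ) * a ^ (2 / 3 : ℝ) / 2 := by
  set y := x ^ (1 / 3 : ℝ)
  set v := a ^ (1 / 3 : ℝ)
  have hy : 0 < y := by positivity
  have hv : 0 < v := by positivity
  have hyx : y ^ 3 = x := by rw [← Real.rpow_mul_natCast hx.le]; norm_num
  have hva : v ^ 3 = a := by rw [← Real.rpow_mul_natCast ha.le]; norm_num
  have hva' : v ^ 2 = a ^ (2 / 3 : ℝ) := by rw [← Real.rpow_mul_natCast ha.le]; norm_num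
  refine ⟨2 * v ^ 4 / y, by positivity, ?_, ?_⟩
  · rw [← hyx, ← hva]
    field_simp
    ring
  · rw [← hva', ← hva]
    field_simp

lemma abs_sum_mul_sawtooth_div_sq_le (hx : 2 ≤ x) (hN : 0 < N) (hxN : (N : ℝ) ^ 3 ≤ x) :
    |∑ u ∈ Ico (N / 2 + 1) (N + 1), u * sawtooth (x / (u : ℝ) ^ 2)| ≤
      2 ^ 24 * x ^ (1 / 3 : ℝ) * Real.log x * (N : ℝ) ^ (2 / 3 : ℝ) := by
  have hN₁ : (1 : ℝ) ≤ N := Nat.one_le_cast.mpr hN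
  have hNx : (N : ℝ) ≤ x := (le_self_pow₀ hN₁ three_ne_zero).trans hxN
  have hlog : 0 ≤ Real.log x := Real.log_nonneg (by linarith)
  obtain ⟨T, hT, hTx, hNT⟩ :=
    exists_pow_three_mul_eq (a := N) (x := x) (by linarith) (by linarith)
  have hT_cube := pow_three_le_of_pow_three_mul_eq hT.le hN hxN hTx
  have htails : ∀ k ∈ Icc (N / 2 + 1) (N + 1),
      |∑ u ∈ Ico k (N + 1), sawtooth (x / (u : ℝ) ^ 2)| ≤ 2 ^ 22 * (N / T) * (4 * Real.log x) :=
    fun k hk ↦ (abs_sum_sawtooth_div_sq_le hT hN hxN hTx hk).trans <| by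
      gcongr
      exact one_add_posLog_le hx hT.le (by linarith)
  calc |∑ u ∈ Ico (N / 2 + 1) (N + 1), u * sawtooth (x / (u : ℝ) ^ 2)|
      ≤ (N + 1 : ℕ) * (2 ^ 22 * (N / T) * (4 * Real.log x)) :=
        abs_sum_mul_le_of_monotone Nat.mono_cast (Nat.cast_nonneg _) (by lia) htails
    _ ≤ (2 * N) * (2 ^ 22 * (N / T) * (4 * Real.log x)) := by
        gcongr
        push_cast
        linarith
    _ = 2 ^ 25 * (N ^ 2 / T) * Real.log x := by ring
    _ = 2 ^ 24 * x ^ (1 / 3 : ℝ) * Real.log x * (N : ℝ) ^ (2 / 3 : ℝ) := by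
        rw [hNT]
        ring

theorem abs_sum_Icc_mul_sawtooth_div_sq_le (hx : 2 ≤ x) (hxN : (N : ℝ) ^ 3 ≤ x) :
    |∑ u ∈ Icc 1 N, u * sawtooth (x / (u : ℝ) ^ 2)| ≤
      2 ^ 24 * x ^ (1 / 3 : ℝ) * Real.log x / (1 - 2 ^ (-(2 / 3) : ℝ)) * (N : ℝ) ^ (2 / 3 : ℝ) := by
  rw [← Ico_add_one_right_eq_Icc]
  exact abs_sum_le_of_dyadic (by norm_num) fun n hn hn₀ ↦
    abs_sum_mul_sawtooth_div_sq_le hx hn₀ (le_trans (by gcongr) hxN)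

end InverseSquare

theorem stmt18 : ∃ C : ℝ, ∀ x : ℝ, 2 ≤ x →
    |∑ u ∈ Finset.Icc 1 ⌊x ^ ((1 : ℝ) / 3)⌋₊,
        (u : ℝ) * (Int.fract (x / (u : ℝ) ^ 2) - 1 / 2)|
      ≤ C * x ^ ((5 : ℝ) / 9) * Real.log x := by
  refine ⟨2 ^ 24 / (1 - 2 ^ (-(2 / 3) : ℝ)), fun x hx ↦ ?_⟩
  set N := ⌊x ^ ((1 : ℝ) / 3)⌋₊
  have hx₀ : 0 < x := by linarith
  have hlog : 0 ≤ Real.log x := Real.log_nonneg (by linarith)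
  have hratio : (2 : ℝ) ^ (-(2 / 3) : ℝ) < 1 :=
    Real.rpow_lt_one_of_one_lt_of_neg one_lt_two (by norm_num)
  have hN : (N : ℝ) ≤ x ^ (1 / 3 : ℝ) := Nat.floor_le (by positivity)
  have hcube : (N : ℝ) ^ 3 ≤ x := by
    calc (N : ℝ) ^ 3 ≤ (x ^ (1 / 3 : ℝ)) ^ 3 := by gcongr
      _ = x := by rw [← Real.rpow_mul_natCast hx₀.le]; norm_num
  have hexp : x ^ (5 / 9 : ℝ) = x ^ (1 / 3 : ℝ) * (x ^ (1 / 3 : ℝ)) ^ (2 / 3 : ℝ) := by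
    rw [← Real.rpow_mul hx₀.le, ← Real.rpow_add hx₀]
    norm_num
  refine (abs_sum_Icc_mul_sawtooth_div_sq_le hx hcube).trans ?_
  calc 2 ^ 24 * x ^ (1 / 3 : ℝ) * Real.log x / (1 - 2 ^ (-(2 / 3) : ℝ)) * (N : ℝ) ^ (2 / 3 : ℝ)
      ≤ 2 ^ 24 * x ^ (1 / 3 : ℝ) * Real.log x / (1 - 2 ^ (-(2 / 3) : ℝ)) *
          (x ^ (1 / 3 : ℝ)) ^ (2 / 3 : ℝ) := by gcongr
    _ = 2 ^ 24 / (1 - 2 ^ (-(2 / 3) : ℝ)) * x ^ (5 / 9 : ℝ) * Real.log x := by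
        rw [hexp]
        ring
end
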